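/- arXiv:2102.01247 — 3 statements merged into one kernel-verified Lean document; each statement's English description precedes it below -/
import Mathlib

section
/- Fix a discrete memoryless MAC with finite alphabets and a product input pmf p_{X₁}p_{X₂} with V₂>0. For each k∈[K] let X₁ⁿ(k) be an i.i.d.-p_{X₁} n-vector and X₂ⁿ(k) an i.i.d.-p_{X₂} n-vector, all 2K vectors mutually independent, and let Z₀ be a standard Gaussian independent of everything. Then there exist constants c, c', δ>0 and n₀ (depending only on the channel and on p_{X₁},p_{X₂}) such that for all n≥n₀, all positive integers K with log₂K ≤ δn, all positive integers M₁,M₂, and all ε∈(0,1): if (i) ε ≥ Pr( max_{k∈[K]} Σ_{i=1}ⁿ i(X₁ᵢ(k),X₂ᵢ(k)) + √(nV₂)·Z₀ < log₂(M₁M₂K) + ½log₂n ) + c'·(√(log₂n/n) + √(log₂K/n)), (ii) log₂M₁ ≤ nI(X₁;Y|X₂) − c√(n·log₂K + n·log₂n), and (iii) log₂M₂ ≤ nI(X₂;Y|X₁) − c√(n·log₂K + n·log₂n), then an (n,M₁,M₂,K,ε) facilitated MAC code exists. -/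
/-! The proof is a random coding argument. Every message `m₁` of the first sender receives `K` i.i.d.
codewords, one per value of the facilitator's index, and likewise for `m₂`. Given `(m₁, m₂)` the
facilitator announces the index `k` that maximises `∑ᵢ i(x₁ᵢ(k), x₂ᵢ(k))`, so the selected
codewords have information density of conditional mean `max_k ∑ᵢ i(X₁ᵢ(k), X₂ᵢ(k))`. The decoder
looks for a message pair one of whose `K` codeword pairs passes three likelihood-ratio tests
(`passTest`): against `p_Y`, `p_{Y|X₂}` and `p_{Y|X₁}`, at levels `M₁M₂K√n`, `M₁K√n`, `M₂K√n`.

*False alarms* (`random_coding`, `false_alarm_one`, `false_alarm_two`, `false_alarm_both`). Whatever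
the output block is, a wrong row is independent of it, and a change of measure bounds the
probability that it passes by `K` over the level. A union bound over wrong messages costs at most
`1/√n` for each of the three types of error.

*Missed detection* (`missed_detection`). On the support, failing the test means that one of the
three accumulated information densities is below the logarithm of its level (`not_passTest`). For
the two conditional densities, the individual rate conditions leave a margin
`2R√(n log₂ K + n log₂ n)`, where `R` bounds all the single-letter quantities; by Hoeffding's
inequality this is violated with probability at most `1/(Kn)` in a given column, which survives a union bound over the columns. For
the joint density, the noise is a sum of independent bounded terms once the codewords are fixed, so
a Berry–Esseen bound (`berry_esseen_bounded`, `noise_bound`) compares it with `√(nV₂) Z₀`. The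
conditional variance depends on the selected codewords; Hoeffding's inequality together with a union
bound over the columns again shows that it deviates from `nV₂` by at most
`2R√(n log₂ K + n log₂ n)`, which changes the Gaussian probability by `O(√(log₂ n/n) + √(log₂ K/n))`.

The Berry–Esseen bound is only needed in one direction and with bounded summands. It is proved by
Stein's method with the explicit solution `steinSol` of Stein's equation; comparing with a Gaussian
of the wrong variance comes at no extra cost in this approach.
-/

open scoped BigOperators Classical

noncomputable section

/-- A pmf on a finite type. -/
def IsPMF {α : Type*} [Fintype α] (p : α → ℝ) : Prop :=
  (∀ a, 0 ≤ p a) ∧ ∑ a, p a = 1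

variable {X1 X2 Y : Type*} [Fintype X1] [Fintype X2] [Fintype Y]

/-- A discrete memoryless MAC: a conditional pmf `W(y|x₁,x₂)` on finite alphabets. -/
def IsChannel (W : X1 → X2 → Y → ℝ) : Prop :=
  (∀ x1 x2 y, 0 ≤ W x1 x2 y) ∧ ∀ x1 x2, ∑ y, W x1 x2 y = 1

/-- The output marginal `p_Y` induced by a product input pmf `p₁·p₂`. -/
def outDist (W : X1 → X2 → Y → ℝ) (p1 : X1 → ℝ) (p2 : X2 → ℝ) (y : Y) : ℝ :=
  ∑ x1, ∑ x2, p1 x1 * p2 x2 * W x1 x2 y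

/-- The joint information density `i(x₁,x₂;y) = log₂(W(y|x₁,x₂)/p_Y(y))`. -/
def iDens (W : X1 → X2 → Y → ℝ) (p1 : X1 → ℝ) (p2 : X2 → ℝ)
    (x1 : X1) (x2 : X2) (y : Y) : ℝ :=
  Real.logb 2 (W x1 x2 y / outDist W p1 p2 y)

/-- The conditional output marginal `p_{Y|X₂}(y|x₂)`. -/
def condOut2 (W : X1 → X2 → Y → ℝ) (p1 : X1 → ℝ) (x2 : X2) (y : Y) : ℝ :=
  ∑ x1, p1 x1 * W x1 x2 y

/-- The conditional output marginal `p_{Y|X₁}(y|x₁)`. -/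
def condOut1 (W : X1 → X2 → Y → ℝ) (p2 : X2 → ℝ) (x1 : X1) (y : Y) : ℝ :=
  ∑ x2, p2 x2 * W x1 x2 y

/-- The conditional information density `i(x₁;y|x₂)`. -/
def iDensC1 (W : X1 → X2 → Y → ℝ) (p1 : X1 → ℝ) (x1 : X1) (x2 : X2) (y : Y) : ℝ :=
  Real.logb 2 (W x1 x2 y / condOut2 W p1 x2 y)

/-- The conditional information density `i(x₂;y|x₁)`. -/
def iDensC2 (W : X1 → X2 → Y → ℝ) (p2 : X2 → ℝ) (x1 : X1) (x2 : X2) (y : Y) : ℝ :=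
  Real.logb 2 (W x1 x2 y / condOut1 W p2 x1 y)

/-- `i(x₁,x₂) = E[i(x₁,x₂;Y) | X₁=x₁, X₂=x₂] = D(W(·|x₁,x₂) ‖ p_Y)`. -/
def iBar (W : X1 → X2 → Y → ℝ) (p1 : X1 → ℝ) (p2 : X2 → ℝ) (x1 : X1) (x2 : X2) : ℝ :=
  ∑ y, W x1 x2 y * iDens W p1 p2 x1 x2 y

/-- The mutual information `I(X₁,X₂;Y)` under the product input pmf `p₁·p₂` (log base 2). -/
def Isum (W : X1 → X2 → Y → ℝ) (p1 : X1 → ℝ) (p2 : X2 → ℝ) : ℝ :=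
  ∑ x1, ∑ x2, p1 x1 * p2 x2 * iBar W p1 p2 x1 x2

/-- The conditional mutual information `I(X₁;Y|X₂)` under `p₁·p₂`. -/
def Icond1 (W : X1 → X2 → Y → ℝ) (p1 : X1 → ℝ) (p2 : X2 → ℝ) : ℝ :=
  ∑ x1, ∑ x2, ∑ y, p1 x1 * p2 x2 * W x1 x2 y * iDensC1 W p1 x1 x2 y

/-- The conditional mutual information `I(X₂;Y|X₁)` under `p₁·p₂`. -/
def Icond2 (W : X1 → X2 → Y → ℝ) (p1 : X1 → ℝ) (p2 : X2 → ℝ) : ℝ :=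
  ∑ x1, ∑ x2, ∑ y, p1 x1 * p2 x2 * W x1 x2 y * iDensC2 W p2 x1 x2 y

/-- `V₁ = Var(i(X₁,X₂))`, the information variance of the codewords. -/
def Vone (W : X1 → X2 → Y → ℝ) (p1 : X1 → ℝ) (p2 : X2 → ℝ) : ℝ :=
  ∑ x1, ∑ x2, p1 x1 * p2 x2 * (iBar W p1 p2 x1 x2 - Isum W p1 p2) ^ 2

/-- `V₂ = E[Var(i(X₁,X₂;Y)|X₁,X₂)]`, the information variance of the channel noise. -/
def Vtwo (W : X1 → X2 → Y → ℝ) (p1 : X1 → ℝ) (p2 : X2 → ℝ) : ℝ :=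
  ∑ x1, ∑ x2, ∑ y,
    p1 x1 * p2 x2 * W x1 x2 y * (iDens W p1 p2 x1 x2 y - iBar W p1 p2 x1 x2) ^ 2

/-- The average error probability of an `(M₁,M₂,K)` facilitated MAC code (facilitator `e`,
encoders `f₁, f₂`, decoder `g`) on the `n`-fold memoryless product channel. -/
def avgErr (W : X1 → X2 → Y → ℝ) {n M1 M2 K : ℕ}
    (e : Fin M1 → Fin M2 → Fin K)
    (f1 : Fin M1 → Fin K → Fin n → X1) (f2 : Fin M2 → Fin K → Fin n → X2)
    (g : (Fin n → Y) → Fin M1 × Fin M2) : ℝ :=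
  (1 / ((M1 : ℝ) * M2)) * ∑ m1, ∑ m2, ∑ y : Fin n → Y,
    (∏ i, W (f1 m1 (e m1 m2) i) (f2 m2 (e m1 m2) i) (y i)) *
      (if g y = (m1, m2) then 0 else 1)

/-- Existence of an `(n,M₁,M₂,K,ε)` facilitated MAC code. -/
def ExistsCode (W : X1 → X2 → Y → ℝ) (n M1 M2 K : ℕ) (ε : ℝ) : Prop :=
  ∃ (e : Fin M1 → Fin M2 → Fin K) (f1 : Fin M1 → Fin K → Fin n → X1)
    (f2 : Fin M2 → Fin K → Fin n → X2) (g : (Fin n → Y) → Fin M1 × Fin M2),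
    avgErr W e f1 f2 g ≤ ε

/-- The fundamental sum-rate limit `R_sum(n,ε,K)`. -/
def Rsum (W : X1 → X2 → Y → ℝ) (n : ℕ) (ε : ℝ) (K : ℕ) : ℝ :=
  sSup {r | ∃ M1 M2 : ℕ, 0 < M1 ∧ 0 < M2 ∧ ExistsCode W n M1 M2 K ε ∧
    r = Real.logb 2 ((M1 : ℝ) * M2) / n}

/-- The sum-capacity `C_sum = max_{p₁·p₂} I(X₁,X₂;Y)`. -/
def Csum (W : X1 → X2 → Y → ℝ) : ℝ :=
  sSup {r | ∃ p1 p2, IsPMF p1 ∧ IsPMF p2 ∧ r = Isum W p1 p2}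

/-! ### Gaussian estimates and the solution of Stein's equation -/

section Gaussian
open MeasureTheory Set Filter

/-- The unnormalised Gaussian distribution function `Ψ(w) = ∫_{-∞}^w exp(-x²/2) dx`. -/
def gaussInt (w : ℝ) : ℝ := ∫ x in Iic w, Real.exp (-(x ^ 2) / 2)

/-- The total mass `√(2π)` of the unnormalised Gaussian. -/
def gaussMass : ℝ := Real.sqrt (2 * Real.pi)

theorem gaussMass_pos : 0 < gaussMass := by unfold gaussMass; positivity

theorem one_le_gaussMass : 1 ≤ gaussMass := by
  unfold gaussMass
  rw [Real.one_le_sqrt]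
  linarith [Real.pi_gt_three]

theorem gaussMass_le_three : gaussMass ≤ 3 := by
  unfold gaussMass
  rw [Real.sqrt_le_left (by norm_num)]
  linarith [Real.pi_lt_four]

theorem integrable_gaussExp : Integrable (fun x : ℝ => Real.exp (-(x ^ 2) / 2)) := by
  have h := integrable_exp_neg_mul_sq (b := 1 / 2) (by norm_num)
  refine h.congr (ae_of_all _ fun x => ?_)
  simp only
  congr 1; ring

theorem continuous_gaussExp : Continuous (fun x : ℝ => Real.exp (-(x ^ 2) / 2)) := by fun_prop

theorem gaussInt_nonneg (w : ℝ) : 0 ≤ gaussInt w :=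
  integral_nonneg fun _ => (Real.exp_pos _).le

theorem gaussInt_sub (a b : ℝ) :
    gaussInt b - gaussInt a = ∫ x in a..b, Real.exp (-(x ^ 2) / 2) :=
  intervalIntegral.integral_Iic_sub_Iic integrable_gaussExp.integrableOn
    integrable_gaussExp.integrableOn

theorem hasDerivAt_gaussInt (w : ℝ) : HasDerivAt gaussInt (Real.exp (-(w ^ 2) / 2)) w := by
  have h : HasDerivAt (fun u => ∫ x in (0 : ℝ)..u, Real.exp (-(x ^ 2) / 2))
      (Real.exp (-(w ^ 2) / 2)) w :=
    continuous_gaussExp.integral_hasStrictDerivAt 0 w |>.hasDerivAt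
  have h2 : gaussInt = fun u => gaussInt 0 + ∫ x in (0 : ℝ)..u, Real.exp (-(x ^ 2) / 2) := by
    funext u
    rw [← gaussInt_sub]; ring
  rw [h2]
  exact h.const_add _

theorem gaussInt_mono : Monotone gaussInt :=
  monotone_of_hasDerivAt_nonneg hasDerivAt_gaussInt fun _ => (Real.exp_pos _).le

theorem gaussInt_add_neg (w : ℝ) : gaussInt w + gaussInt (-w) = gaussMass := by
  have h1 : gaussInt (-w) = ∫ x in Ioi w, Real.exp (-(x ^ 2) / 2) := by
    have := integral_comp_neg_Iic (-w) (fun x : ℝ => Real.exp (-(x ^ 2) / 2))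
    simp only [neg_sq, neg_neg] at this
    exact this
  rw [h1]
  unfold gaussInt
  have h2 := integral_add_compl (measurableSet_Iic (a := w)) integrable_gaussExp
  rw [compl_Iic] at h2
  rw [h2]
  have h3 := integral_gaussian (1 / 2)
  unfold gaussMass
  rw [show 2 * Real.pi = Real.pi / (1 / 2) by ring, ← h3]
  congr 1; funext x; congr 1; ring

theorem gaussInt_le_mass (w : ℝ) : gaussInt w ≤ gaussMass := by
  linarith [gaussInt_add_neg w, gaussInt_nonneg (-w)]

/-- Mills' ratio bound for the lower tail. -/
theorem mills_bound (w : ℝ) : w * gaussInt (-w) ≤ Real.exp (-(w ^ 2) / 2) := by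
  have hd : ∀ x ∈ Iic (-w), HasDerivAt (fun x : ℝ => Real.exp (-(x ^ 2) / 2))
      (-x * Real.exp (-(x ^ 2) / 2)) x := by
    intro x _
    have h : HasDerivAt (fun x : ℝ => -(x ^ 2) / 2) (-x) x := by
      have := ((hasDerivAt_pow 2 x).neg).div_const 2
      refine this.congr_deriv ?_
      simp; ring
    have := h.exp
    rwa [mul_comm] at this
  have hi : Integrable (fun x : ℝ => -x * Real.exp (-(x ^ 2) / 2)) := by
    have := (integrable_mul_exp_neg_mul_sq (b := 1 / 2) (by norm_num)).neg
    refine this.congr (ae_of_all _ fun x => ?_)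
    simp only [Pi.neg_apply, neg_mul]
    congr 3; ring
  have ht : Tendsto (fun x : ℝ => Real.exp (-(x ^ 2) / 2)) atBot (nhds 0) := by
    refine Real.tendsto_exp_atBot.comp ?_
    have : Tendsto (fun x : ℝ => x ^ 2 / 2) atBot atTop :=
      Tendsto.atTop_div_const (by norm_num)
        (((tendsto_pow_atTop two_ne_zero).comp tendsto_neg_atBot_atTop).congr fun x => by simp)
    refine (tendsto_neg_atTop_atBot.comp this).congr fun x => ?_
    simp; ring
  have h := integral_Iic_of_hasDerivAt_of_tendsto' hd hi.integrableOn ht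
  have h2 : w * gaussInt (-w) ≤ ∫ x in Iic (-w), -x * Real.exp (-(x ^ 2) / 2) := by
    unfold gaussInt
    rw [← integral_const_mul]
    refine setIntegral_mono_on (integrable_gaussExp.const_mul w).integrableOn hi.integrableOn
      measurableSet_Iic fun x hx => ?_
    have : x ≤ -w := hx
    gcongr
    linarith
  rw [h] at h2
  simpa using h2

theorem gaussInt_tail_le {w : ℝ} (hw : 0 ≤ w) :
    gaussInt (-w) ≤ 3 * Real.exp (-(w ^ 2) / 2) := by
  by_cases h1 : 1 ≤ w
  · have := mills_bound w
    nlinarith [gaussInt_nonneg (-w), Real.exp_pos (-(w ^ 2) / 2)]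
  · push Not at h1
    have h2 : gaussInt (-w) ≤ gaussInt 0 := gaussInt_mono (by linarith)
    have h3 := gaussInt_add_neg 0
    rw [neg_zero] at h3
    have h4 := Real.add_one_le_exp (-(w ^ 2) / 2)
    nlinarith [gaussMass_le_three]

/-- The solution of Stein's equation `f'(w) - w f(w) = 1{w < z} - Φ(z)`. -/
def steinSol (z w : ℝ) : ℝ :=
  Real.exp (w ^ 2 / 2) * (gaussInt (min w z) - gaussInt z * gaussInt w / gaussMass)

theorem steinSol_nonneg (z w : ℝ) : 0 ≤ steinSol z w := by
  unfold steinSol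
  refine mul_nonneg (Real.exp_pos _).le ?_
  have hs := gaussMass_pos
  rw [sub_nonneg, div_le_iff₀ hs]
  rcases le_total w z with h | h
  · rw [min_eq_left h, mul_comm]
    exact mul_le_mul_of_nonneg_left (gaussInt_le_mass z) (gaussInt_nonneg w)
  · rw [min_eq_right h]
    exact mul_le_mul_of_nonneg_left (gaussInt_le_mass w) (gaussInt_nonneg z)

theorem steinSol_le (z w : ℝ) :
    steinSol z w ≤ Real.exp (w ^ 2 / 2) * gaussInt (-|w|) := by
  unfold steinSol
  refine mul_le_mul_of_nonneg_left ?_ (Real.exp_pos _).le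
  have hs := gaussMass_pos
  have ha : gaussInt (min w z) - gaussInt z * gaussInt w / gaussMass ≤ gaussInt w := by
    have h1 := gaussInt_mono (min_le_left w z)
    have : 0 ≤ gaussInt z * gaussInt w / gaussMass :=
      div_nonneg (mul_nonneg (gaussInt_nonneg _) (gaussInt_nonneg _)) hs.le
    linarith
  have hb : gaussInt (min w z) - gaussInt z * gaussInt w / gaussMass ≤ gaussInt (-w) := by
    rw [sub_le_iff_le_add, ← sub_le_iff_le_add', le_div_iff₀ hs]
    have e1 := gaussInt_add_neg w
    have e2 := gaussInt_add_neg z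
    rcases le_total w z with h | h
    · rw [min_eq_left h]
      have h3 : gaussInt (-z) ≤ gaussInt (-w) := gaussInt_mono (by linarith)
      nlinarith [gaussInt_nonneg w, gaussInt_nonneg (-w), gaussInt_nonneg (-z), gaussInt_le_mass w]
    · rw [min_eq_right h]
      nlinarith [gaussInt_nonneg w, gaussInt_nonneg (-w), gaussInt_nonneg z, gaussInt_nonneg (-z)]
  rcases abs_cases w with ⟨h, _⟩ | ⟨h, _⟩
  · rw [h]; exact hb
  · rw [h, neg_neg]; exact ha

theorem steinSol_le_three (z w : ℝ) : steinSol z w ≤ 3 := by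
  refine (steinSol_le z w).trans ?_
  have h := gaussInt_tail_le (abs_nonneg w)
  rw [sq_abs] at h
  calc _ ≤ Real.exp (w ^ 2 / 2) * (3 * Real.exp (-(w ^ 2) / 2)) := by gcongr
    _ = 3 * Real.exp (w ^ 2 / 2 + -(w ^ 2) / 2) := by rw [Real.exp_add]; ring
    _ = 3 := by rw [show w ^ 2 / 2 + -(w ^ 2) / 2 = 0 by ring]; simp

theorem abs_mul_steinSol_le (z w : ℝ) : |w * steinSol z w| ≤ 1 := by
  rw [abs_mul, abs_of_nonneg (steinSol_nonneg z w)]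
  have h := mills_bound |w|
  rw [sq_abs] at h
  calc |w| * steinSol z w ≤ |w| * (Real.exp (w ^ 2 / 2) * gaussInt (-|w|)) := by
        gcongr; exact steinSol_le z w
    _ = Real.exp (w ^ 2 / 2) * (|w| * gaussInt (-|w|)) := by ring
    _ ≤ Real.exp (w ^ 2 / 2) * Real.exp (-(w ^ 2) / 2) := by gcongr
    _ = 1 := by rw [← Real.exp_add, show w ^ 2 / 2 + -(w ^ 2) / 2 = 0 by ring]; simp

theorem continuous_steinSol (z : ℝ) : Continuous (steinSol z) := by
  have hc : Continuous gaussInt :=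
    continuous_iff_continuousAt.2 fun w => (hasDerivAt_gaussInt w).continuousAt
  unfold steinSol
  fun_prop

/-- The right derivative of the Stein solution, valid at the kink `w = z` as well. -/
theorem steinSol_hasDerivWithinAt (z w : ℝ) :
    HasDerivWithinAt (steinSol z)
      (w * steinSol z w + (if w < z then 1 else 0) - gaussInt z / gaussMass) (Ici w) w := by
  have he : HasDerivAt (fun w : ℝ => Real.exp (w ^ 2 / 2)) (w * Real.exp (w ^ 2 / 2)) w := by
    have h : HasDerivAt (fun x : ℝ => x ^ 2 / 2) w w := by
      refine ((hasDerivAt_pow 2 w).div_const 2).congr_deriv ?_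
      simp
    have := h.exp
    rwa [mul_comm] at this
  have hm : HasDerivWithinAt (fun w => gaussInt (min w z))
      ((if w < z then 1 else 0) * Real.exp (-(w ^ 2) / 2)) (Ici w) w := by
    by_cases h : w < z
    · rw [if_pos h, one_mul]
      refine HasDerivAt.hasDerivWithinAt ?_
      refine (hasDerivAt_gaussInt w).congr_of_eventuallyEq ?_
      filter_upwards [Iio_mem_nhds h] with u hu
      rw [min_eq_left (le_of_lt hu)]
    · rw [if_neg h, zero_mul]
      push Not at h
      refine (hasDerivWithinAt_const w (Ici w) (gaussInt z)).congr ?_ ?_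
      · intro u hu
        rw [min_eq_right (h.trans hu)]
      · rw [min_eq_right h]
  have hg := ((hasDerivAt_gaussInt w).hasDerivWithinAt (s := Ici w)).const_mul
    (gaussInt z / gaussMass)
  have := he.hasDerivWithinAt (s := Ici w) |>.mul (hm.sub hg)
  have e : steinSol z = (fun w : ℝ => Real.exp (w ^ 2 / 2)) *
      ((fun w => gaussInt (min w z)) - fun w => gaussInt z / gaussMass * gaussInt w) := by
    funext u
    simp only [steinSol, Pi.mul_apply, Pi.sub_apply]
    ring
  rw [e]
  refine this.congr_deriv ?_
  simp only [Pi.mul_apply, Pi.sub_apply]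
  have hee : Real.exp (w ^ 2 / 2) * Real.exp (-(w ^ 2) / 2) = 1 := by
    rw [← Real.exp_add, show w ^ 2 / 2 + -(w ^ 2) / 2 = 0 by ring]; simp
  linear_combination ((if w < z then 1 else 0) - gaussInt z / gaussMass) * hee

/-- A continuous function whose right derivative is at least `L` on `[a, b)` grows at least
linearly with slope `L`. -/
theorem sub_ge_of_right_deriv_ge {f f' : ℝ → ℝ} (hf : Continuous f)
    (hd : ∀ x, HasDerivWithinAt f (f' x) (Ici x) x) {a b L : ℝ} (hab : a ≤ b)
    (hL : ∀ x ∈ Ico a b, L ≤ f' x) : L * (b - a) ≤ f b - f a := by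
  have h := image_le_of_deriv_right_le_deriv_boundary
    (f := fun x => L * (x - a)) (f' := fun _ => L) (a := a) (b := b)
    (B := fun x => f x - f a) (B' := f') (by fun_prop)
    (fun x _ => by
      have := (((hasDerivAt_id x).sub_const a).const_mul L).hasDerivWithinAt (s := Ici x)
      simpa using this) (by simp)
    (by fun_prop) (fun x _ => (hd x).sub_const _) (fun x hx => hL x hx)
    (right_mem_Icc.2 hab)
  exact h

theorem steinSol_lipschitz (z a b : ℝ) : |steinSol z b - steinSol z a| ≤ 2 * |b - a| := by
  have key : ∀ a b : ℝ, a ≤ b → |steinSol z b - steinSol z a| ≤ 2 * (b - a) := by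
    intro a b hab
    have hPhi0 : 0 ≤ gaussInt z / gaussMass := div_nonneg (gaussInt_nonneg z) gaussMass_pos.le
    have hPhi1 : gaussInt z / gaussMass ≤ 1 := (div_le_one gaussMass_pos).2 (gaussInt_le_mass z)
    have h1 := sub_ge_of_right_deriv_ge (continuous_steinSol z) (steinSol_hasDerivWithinAt z)
      hab (L := -2) (by
        intro x _
        have := (abs_le.1 (abs_mul_steinSol_le z x)).1
        split_ifs <;> linarith)
    have h2 := sub_ge_of_right_deriv_ge (continuous_steinSol z).neg
      (fun x => (steinSol_hasDerivWithinAt z x).neg)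
      hab (L := -2) (by
        intro x _
        have := (abs_le.1 (abs_mul_steinSol_le z x)).2
        split_ifs <;> linarith)
    simp only [Pi.neg_apply] at h2
    rw [abs_le]
    constructor <;> linarith
  rcases le_total a b with h | h
  · rw [abs_of_nonneg (sub_nonneg.2 h)]; exact key a b h
  · rw [abs_sub_comm, abs_sub_comm b a, abs_of_nonneg (sub_nonneg.2 h)]; exact key b a h

theorem mul_steinSol_sub_le (z w u : ℝ) :
    |u * steinSol z u - w * steinSol z w| ≤ 3 * (1 + |w|) * |u - w| := by
  have e : u * steinSol z u - w * steinSol z w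
      = (u - w) * steinSol z u + w * (steinSol z u - steinSol z w) := by ring
  rw [e]
  refine (abs_add_le _ _).trans ?_
  rw [abs_mul, abs_mul, abs_of_nonneg (steinSol_nonneg z u)]
  have h1 := steinSol_le_three z u
  have h2 := steinSol_lipschitz z w u
  have h3 := mul_le_mul_of_nonneg_left h1 (abs_nonneg (u - w))
  have h4 := mul_le_mul_of_nonneg_left h2 (abs_nonneg w)
  nlinarith [mul_nonneg (abs_nonneg w) (abs_nonneg (u - w))]

/-- One term of Stein's identity: the increment of the Stein solution for threshold `z + 2d`
over a step `x` with `|x| ≤ d` times `x`, is at least `x²` times a quantity free of `x`. -/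
theorem steinSol_step (z w x d : ℝ) (hx : |x| ≤ d) :
    x ^ 2 * (w * steinSol (z + 2 * d) w - 3 * (1 + |w|) * d + (if w < z + d then 1 else 0)
        - gaussInt (z + 2 * d) / gaussMass)
      ≤ x * (steinSol (z + 2 * d) (w + x) - steinSol (z + 2 * d) w) := by
  set z' := z + 2 * d with hz'
  set L := w * steinSol z' w - 3 * (1 + |w|) * d + (if w < z + d then 1 else 0)
        - gaussInt z' / gaussMass with hLdef
  have hd : 0 ≤ d := (abs_nonneg x).trans hx
  obtain ⟨hx1, hx2⟩ := abs_le.1 hx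
  have hL : ∀ u, |u - w| ≤ d → u < w + d →
      L ≤ u * steinSol z' u + (if u < z' then 1 else 0) - gaussInt z' / gaussMass := by
    intro u hu hu2
    have h1 := (abs_le.1 (mul_steinSol_sub_le z' w u)).1
    have h2 : 3 * (1 + |w|) * |u - w| ≤ 3 * (1 + |w|) * d := by gcongr
    have h3 : (if w < z + d then (1 : ℝ) else 0) ≤ (if u < z' then 1 else 0) := by
      by_cases h : w < z + d
      · rw [if_pos h, if_pos (by linarith)]
      · rw [if_neg h]; split_ifs <;> norm_num
    rw [hLdef]; linarith
  rcases le_total 0 x with h | h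
  · have := sub_ge_of_right_deriv_ge (continuous_steinSol z') (steinSol_hasDerivWithinAt z')
      (a := w) (b := w + x) (L := L) (by linarith) (fun u hu => hL u
        (by rw [abs_le]; constructor <;> linarith [hu.1, hu.2]) (by linarith [hu.2]))
    nlinarith
  · rcases h.eq_or_lt with h0 | h0
    · simp [h0]
    have := sub_ge_of_right_deriv_ge (continuous_steinSol z') (steinSol_hasDerivWithinAt z')
      (a := w + x) (b := w) (L := L) (by linarith) (fun u hu => hL u
        (by rw [abs_le]; constructor <;> linarith [hu.1, hu.2]) (by linarith [hu.2]))
    nlinarith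

/-- The standard Gaussian distribution function in terms of `gaussInt`. -/
theorem gaussianReal_Iio (z : ℝ) :
    ((ProbabilityTheory.gaussianReal 0 1) (Iio z)).toReal = gaussInt z / gaussMass := by
  rw [ProbabilityTheory.gaussianReal_apply_eq_integral 0 (by norm_num)]
  rw [ENNReal.toReal_ofReal (integral_nonneg fun x => ProbabilityTheory.gaussianPDFReal_nonneg _ _ _)]
  rw [← integral_Iic_eq_integral_Iio]
  unfold gaussInt gaussMass
  rw [div_eq_inv_mul, ← integral_const_mul]
  congr 1
  funext x
  simp [ProbabilityTheory.gaussianPDFReal]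

theorem gaussInt_shift (z d : ℝ) (hd : 0 ≤ d) :
    gaussInt (z + d) / gaussMass ≤ gaussInt z / gaussMass + d := by
  have h : gaussInt (z + d) - gaussInt z ≤ d := by
    have := Convex.image_sub_le_mul_sub_of_deriv_le (f := gaussInt) (D := univ) convex_univ
      (fun x _ => (hasDerivAt_gaussInt x).continuousAt.continuousWithinAt)
      (fun x _ => (hasDerivAt_gaussInt x).differentiableAt.differentiableWithinAt) (C := 1)
      (fun x _ => by
        rw [(hasDerivAt_gaussInt x).deriv, Real.exp_le_one_iff]
        nlinarith [sq_nonneg x]) z (mem_univ _) (z + d) (mem_univ _) (by linarith)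
    linarith
  rw [← sub_le_iff_le_add', ← sub_div, div_le_iff₀ gaussMass_pos]
  nlinarith [one_le_gaussMass]

end Gaussian

/-! ### Expectations over finite product spaces -/

/-- The expectation `∑ₐ p(a) f(a)` of `f` under a weight `p` on a finite type. -/
def fexp {α : Type*} [Fintype α] (p f : α → ℝ) : ℝ := ∑ a, p a * f a

/-- The product weight `y ↦ ∏ᵢ wᵢ(yᵢ)`. -/
def piW {ι α : Type*} [Fintype ι] (w : ι → α → ℝ) (y : ι → α) : ℝ := ∏ i, w i (y i)

section FiniteExpectation
variable {α β ι : Type*} [Fintype α] [Fintype β] [Fintype ι]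

theorem fexp_add (p f g : α → ℝ) : fexp p (fun a => f a + g a) = fexp p f + fexp p g := by
  simp only [fexp, mul_add, Finset.sum_add_distrib]

theorem fexp_sub (p f g : α → ℝ) : fexp p (fun a => f a - g a) = fexp p f - fexp p g := by
  simp only [fexp, mul_sub, Finset.sum_sub_distrib]

theorem fexp_const_mul (p f : α → ℝ) (c : ℝ) : fexp p (fun a => c * f a) = c * fexp p f := by
  simp only [fexp, Finset.mul_sum]
  exact Finset.sum_congr rfl fun a _ => by ring

theorem fexp_mul_const (p f : α → ℝ) (c : ℝ) : fexp p (fun a => f a * c) = fexp p f * c := by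
  simp only [fexp, Finset.sum_mul, mul_assoc]

theorem fexp_sum {κ : Type*} (s : Finset κ) (p : α → ℝ) (f : κ → α → ℝ) :
    fexp p (fun a => ∑ k ∈ s, f k a) = ∑ k ∈ s, fexp p (f k) := by
  simp only [fexp, Finset.mul_sum]
  exact Finset.sum_comm

theorem fexp_const {p : α → ℝ} (hp : IsPMF p) (c : ℝ) : fexp p (fun _ => c) = c := by
  simp only [fexp, ← Finset.sum_mul, hp.2, one_mul]

theorem fexp_mono {p : α → ℝ} (hp : IsPMF p) {f g : α → ℝ} (h : ∀ a, f a ≤ g a) :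
    fexp p f ≤ fexp p g :=
  Finset.sum_le_sum fun a _ => mul_le_mul_of_nonneg_left (h a) (hp.1 a)

/-- Monotonicity of the expectation; the comparison is needed on the support only. -/
theorem fexp_mono_supp {p : α → ℝ} (hp : IsPMF p) {f g : α → ℝ} (h : ∀ a, 0 < p a → f a ≤ g a) :
    fexp p f ≤ fexp p g := by
  refine Finset.sum_le_sum fun a _ => ?_
  rcases (hp.1 a).eq_or_lt with h0 | h0
  · simp [← h0]
  · exact mul_le_mul_of_nonneg_left (h a h0) (hp.1 a)

theorem fexp_nonneg {p : α → ℝ} (hp : IsPMF p) {f : α → ℝ} (h : ∀ a, 0 ≤ f a) :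
    0 ≤ fexp p f :=
  Finset.sum_nonneg fun a _ => mul_nonneg (hp.1 a) (h a)

theorem fexp_comm (p : α → ℝ) (q : β → ℝ) (f : α → β → ℝ) :
    fexp p (fun a => fexp q (f a)) = fexp q (fun b => fexp p (fun a => f a b)) := by
  simp only [fexp, Finset.mul_sum]
  rw [Finset.sum_comm]
  exact Finset.sum_congr rfl fun b _ => Finset.sum_congr rfl fun a _ => by ring

/-- A function whose mean is at most `c` is somewhere at most `c`. -/
theorem exists_le_of_fexp_le {p : α → ℝ} (hp : IsPMF p) {f : α → ℝ} {c : ℝ}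
    (h : fexp p f ≤ c) : ∃ a, f a ≤ c := by
  by_contra hcon
  push Not at hcon
  have h1 : ∑ a, p a * c < ∑ a, p a * f a := by
    have hne : ∃ a, 0 < p a := by
      by_contra h0
      push Not at h0
      have : ∑ a, p a ≤ 0 := Finset.sum_nonpos fun a _ => h0 a
      linarith [hp.2]
    obtain ⟨a, ha⟩ := hne
    exact Finset.sum_lt_sum (fun b _ => mul_le_mul_of_nonneg_left (hcon b).le (hp.1 b))
      ⟨a, Finset.mem_univ a, mul_lt_mul_of_pos_left (hcon a) ha⟩
  rw [← Finset.sum_mul, hp.2, one_mul] at h1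
  exact absurd h (not_le.2 h1)

theorem isPMF_piW [DecidableEq ι] {w : ι → α → ℝ} (hw : ∀ i, IsPMF (w i)) : IsPMF (piW w) := by
  refine ⟨fun y => Finset.prod_nonneg fun i _ => (hw i).1 _, ?_⟩
  have := (Fintype.prod_sum (fun i a => w i a)).symm
  unfold piW
  rw [this]
  exact Finset.prod_eq_one fun i _ => (hw i).2

/-- Resampling one coordinate of a product weight leaves expectations unchanged. -/
theorem fexp_resample [DecidableEq ι] {w : ι → α → ℝ} (i : ι) (hw : IsPMF (w i))
    (G : (ι → α) → ℝ) :
    fexp (piW w) G = fexp (piW w) (fun y => fexp (w i) (fun c => G (Function.update y i c))) := by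
  -- exchanging the `i`-th coordinate with the fresh sample preserves the joint weight
  let σ : (ι → α) × α → (ι → α) × α := fun q => (Function.update q.1 i q.2, q.1 i)
  have hσ : Function.Involutive σ := by
    intro q
    simp [σ]
  have hweight : ∀ q : (ι → α) × α,
      piW w (σ q).1 * w i (σ q).2 = piW w q.1 * w i q.2 := by
    rintro ⟨y, c⟩
    simp only [σ, piW]
    rw [← Finset.mul_prod_erase _ _ (Finset.mem_univ i),
      ← Finset.mul_prod_erase Finset.univ (fun j => w j (y j)) (Finset.mem_univ i)]
    rw [Function.update_self, Finset.prod_congr rfl (g := fun j => w j (y j))]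
    · ring
    · intro j hj
      rw [Function.update_of_ne (Finset.ne_of_mem_erase hj)]
  have h1 : fexp (piW w) (fun y => fexp (w i) (fun c => G (Function.update y i c)))
      = ∑ q : (ι → α) × α, piW w q.1 * w i q.2 * G (σ q).1 := by
    rw [Fintype.sum_prod_type]
    simp only [fexp, Finset.mul_sum, σ, mul_assoc]
  have h2 : fexp (piW w) G = ∑ q : (ι → α) × α, piW w q.1 * w i q.2 * G q.1 := by
    rw [Fintype.sum_prod_type]
    unfold fexp
    refine Finset.sum_congr rfl fun y _ => ?_
    simp only
    rw [← Finset.sum_mul, ← Finset.mul_sum, hw.2, mul_one]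
  rw [h1, h2]
  symm
  refine Fintype.sum_equiv hσ.toPerm _ _ fun q => ?_
  simp only [Function.Involutive.coe_toPerm, hweight]

theorem fexp_marginal [DecidableEq ι] {w : ι → α → ℝ} (hw : ∀ i, IsPMF (w i)) (i : ι)
    (F : α → ℝ) : fexp (piW w) (fun y => F (y i)) = fexp (w i) F := by
  rw [fexp_resample i (hw i)]
  simp only [Function.update_self]
  exact fexp_const (isPMF_piW hw) _

theorem fexp_marginal₂ [DecidableEq ι] {w : ι → α → ℝ} (hw : ∀ i, IsPMF (w i)) {i j : ι}
    (hij : i ≠ j) (F : α → α → ℝ) :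
    fexp (piW w) (fun y => F (y i) (y j)) = fexp (w i) (fun a => fexp (w j) (fun b => F a b)) := by
  rw [fexp_resample j (hw j)]
  simp only [Function.update_self, Function.update_of_ne hij]
  exact fexp_marginal hw i (fun a => fexp (w j) (fun b => F a b))

/-- Independence of coordinate `i` from a function that ignores it. -/
theorem fexp_indep [DecidableEq ι] {w : ι → α → ℝ} (i : ι) (hw : IsPMF (w i))
    (h : α → ℝ) (F : (ι → α) → ℝ) (hF : ∀ y c, F (Function.update y i c) = F y) :
    fexp (piW w) (fun y => h (y i) * F y) = fexp (w i) h * fexp (piW w) F := by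
  rw [fexp_resample i hw]
  simp only [Function.update_self, hF, fexp_mul_const]
  exact fexp_const_mul _ _ _

end FiniteExpectation

/-! ### A one-sided Berry–Esseen bound by Stein's method -/

section BerryEsseen
variable {α : Type*} {n : ℕ}

/-- The sum `∑ᵢ Uᵢ(yᵢ)` of independent summands. -/
def indSum (U : Fin n → α → ℝ) (y : Fin n → α) : ℝ := ∑ i, U i (y i)

/-- The sum `∑ⱼ≠ᵢ Uⱼ(yⱼ)` with the `i`-th summand left out. -/
def indSumErase (U : Fin n → α → ℝ) (i : Fin n) (y : Fin n → α) : ℝ :=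
  indSum U y - U i (y i)

theorem indSumErase_update (U : Fin n → α → ℝ) (i : Fin n) (y : Fin n → α) (c : α) :
    indSumErase U i (Function.update y i c) = indSumErase U i y := by
  unfold indSumErase indSum
  rw [← Finset.add_sum_erase _ _ (Finset.mem_univ i),
    ← Finset.add_sum_erase Finset.univ (fun j => U j (y j)) (Finset.mem_univ i),
    Finset.sum_congr rfl (g := fun j => U j (y j))]
  · ring
  · intro j hj
    rw [Function.update_of_ne (Finset.ne_of_mem_erase hj)]

variable [Fintype α]

theorem fexp_indSum_sq {w U : Fin n → α → ℝ} (hw : ∀ i, IsPMF (w i))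
    (hU : ∀ i, fexp (w i) (U i) = 0) :
    fexp (piW w) (fun y => indSum U y ^ 2) = ∑ i, fexp (w i) (fun c => U i c ^ 2) := by
  have h1 : ∀ y, indSum U y ^ 2
      = ∑ i, (U i (y i) * indSumErase U i y + U i (y i) ^ 2) := by
    intro y
    have : ∀ i, U i (y i) * indSumErase U i y + U i (y i) ^ 2 = U i (y i) * indSum U y := by
      intro i; unfold indSumErase; ring
    simp only [this, ← Finset.sum_mul]
    rw [sq]; rfl
  simp only [h1]
  rw [fexp_sum]
  refine Finset.sum_congr rfl fun i _ => ?_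
  rw [fexp_add, fexp_indep i (hw i) (U i) _ (indSumErase_update U i), hU i, zero_mul, zero_add]
  exact fexp_marginal hw i (fun c => U i c ^ 2)

/-- A one-sided Berry–Esseen bound for bounded independent summands, with respect to the
standard Gaussian even when the total variance `v` is only close to `1`.

With `f` the Stein solution at the shifted threshold `z' = z + 2d`, the leave-one-out expansion
of `E[S f(S)] = ∑ᵢ E[Uᵢ f(S)]` gives `v (E[S f(S)] - 18 d + P - Φ(z')) ≤ E[S f(S)]`; the shift by
`2d` makes the indicator in Stein's equation dominate `1{S < z}` along every leave-one-out step,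
so no separate concentration inequality is needed. -/
theorem berry_esseen_bounded {w U : Fin n → α → ℝ} (hw : ∀ i, IsPMF (w i))
    (hU : ∀ i, fexp (w i) (U i) = 0) {d : ℝ} (hd1 : d ≤ 1) (hd0 : 0 ≤ d)
    (hb : ∀ i c, |U i c| ≤ d) {v : ℝ} (hv : v = ∑ i, fexp (w i) (fun c => U i c ^ 2))
    (hv1 : 1 / 2 ≤ v) (hv2 : v ≤ 2) (z : ℝ) :
    fexp (piW w) (fun y => if indSum U y < z then 1 else 0)
      ≤ ((ProbabilityTheory.gaussianReal 0 1) (Set.Iio z)).toReal + 20 * d + 2 * |v - 1| := by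
  have hpi := isPMF_piW hw
  set z' := z + 2 * d with hz'
  set Φ := gaussInt z' / gaussMass with hΦ
  set P := fexp (piW w) (fun y => if indSum U y < z then (1 : ℝ) else 0) with hP
  set g : ℝ → ℝ := fun x => x * steinSol z' x with hg
  set Eg := fexp (piW w) (fun y => g (indSum U y)) with hEg
  have hES : fexp (piW w) (fun y => |indSum U y|) ≤ 3 / 2 := by
    calc _ ≤ fexp (piW w) (fun y => (1 / 2) * (1 + indSum U y ^ 2)) :=
          fexp_mono hpi fun y => by nlinarith [sq_nonneg (|indSum U y| - 1), sq_abs (indSum U y)]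
      _ = (1 / 2) * (1 + v) := by
          rw [fexp_const_mul, fexp_add, fexp_const hpi, fexp_indSum_sq hw hU, hv]
      _ ≤ 3 / 2 := by linarith
  -- contribution of the `i`-th summand to `E[S f(S)]`
  have hterm : ∀ i, fexp (w i) (fun c => U i c ^ 2) * (Eg - 18 * d + P - Φ)
      ≤ fexp (piW w) (fun y => U i (y i) * steinSol z' (indSum U y)) := by
    intro i
    set L : (Fin n → α) → ℝ := fun y =>
      g (indSumErase U i y) - 3 * (1 + |indSumErase U i y|) * d
        + (if indSumErase U i y < z + d then 1 else 0) - Φ with hL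
    have hLlow : Eg - 18 * d + P - Φ ≤ fexp (piW w) L := by
      calc Eg - 18 * d + P - Φ
          ≤ Eg - d * (9 + 6 * fexp (piW w) (fun y => |indSum U y|)) + P - Φ := by nlinarith
        _ = fexp (piW w) (fun y => g (indSum U y) - d * (9 + 6 * |indSum U y|)
              + (if indSum U y < z then (1 : ℝ) else 0) - Φ) := by
            rw [fexp_sub, fexp_add, fexp_sub, fexp_const hpi, fexp_const_mul, fexp_add,
              fexp_const hpi, fexp_const_mul]
        _ ≤ fexp (piW w) L := by
            refine fexp_mono hpi fun y => ?_
            have hdiff : indSumErase U i y - indSum U y = - U i (y i) := by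
              unfold indSumErase; ring
            have hbi := hb i (y i)
            have h1 := (abs_le.1 (mul_steinSol_sub_le z' (indSum U y) (indSumErase U i y))).1
            rw [hdiff, abs_neg] at h1
            have h2 : 3 * (1 + |indSum U y|) * |U i (y i)| ≤ 3 * (1 + |indSum U y|) * d := by
              gcongr
            have h3 : |indSumErase U i y| ≤ |indSum U y| + d := by
              have : indSumErase U i y = indSum U y + - U i (y i) := by linarith
              rw [this]
              refine (abs_add_le _ _).trans ?_
              rw [abs_neg]; linarith
            have h4 : (if indSum U y < z then (1 : ℝ) else 0)
                ≤ if indSumErase U i y < z + d then 1 else 0 := by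
              by_cases h : indSum U y < z
              · rw [if_pos h, if_pos]
                linarith [(abs_le.1 hbi).1]
              · rw [if_neg h]; split_ifs <;> norm_num
            simp only [hL, hg]
            nlinarith [abs_nonneg (indSum U y)]
    calc fexp (w i) (fun c => U i c ^ 2) * (Eg - 18 * d + P - Φ)
        ≤ fexp (w i) (fun c => U i c ^ 2) * fexp (piW w) L :=
          mul_le_mul_of_nonneg_left hLlow (fexp_nonneg (hw i) fun c => sq_nonneg _)
      _ = fexp (piW w) (fun y => U i (y i) ^ 2 * L y) :=
          (fexp_indep i (hw i) (fun c => U i c ^ 2) L fun y c => by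
            simp only [hL, indSumErase_update]).symm
      _ ≤ fexp (piW w) (fun y => U i (y i) * steinSol z' (indSum U y)
            - U i (y i) * steinSol z' (indSumErase U i y)) := by
          refine fexp_mono hpi fun y => ?_
          have h := steinSol_step z (indSumErase U i y) (U i (y i)) d (hb i (y i))
          have e : indSumErase U i y + U i (y i) = indSum U y := by unfold indSumErase; ring
          rw [e] at h
          rw [← mul_sub]
          exact h
      _ = fexp (piW w) (fun y => U i (y i) * steinSol z' (indSum U y)) := by
          rw [fexp_sub, fexp_indep i (hw i) (U i) (fun y => steinSol z' (indSumErase U i y))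
            (fun y c => by simp only [indSumErase_update]), hU i]
          ring
  have hsum : v * (Eg - 18 * d + P - Φ) ≤ Eg := by
    calc v * (Eg - 18 * d + P - Φ)
        = ∑ i, fexp (w i) (fun c => U i c ^ 2) * (Eg - 18 * d + P - Φ) := by
          rw [hv, Finset.sum_mul]
      _ ≤ ∑ i, fexp (piW w) (fun y => U i (y i) * steinSol z' (indSum U y)) :=
          Finset.sum_le_sum fun i _ => hterm i
      _ = Eg := by
          rw [← fexp_sum]
          simp only [hEg, hg, ← Finset.sum_mul]
          rfl
  have hEg1 : |Eg| ≤ 1 := by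
    rw [abs_le]
    constructor
    · have := fexp_mono hpi (f := fun _ => (-1 : ℝ)) (g := fun y => g (indSum U y))
        fun y => (abs_le.1 (abs_mul_steinSol_le z' _)).1
      rwa [fexp_const hpi] at this
    · have := fexp_mono hpi (f := fun y => g (indSum U y)) (g := fun _ => (1 : ℝ))
        fun y => (abs_le.1 (abs_mul_steinSol_le z' _)).2
      rwa [fexp_const hpi] at this
  have hmain : P ≤ Φ + 18 * d + 2 * |v - 1| := by
    have h1 : v * (P - Φ - 18 * d) ≤ (1 - v) * Eg := by linarith
    have h2 : (1 - v) * Eg ≤ |v - 1| := by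
      refine (le_abs_self _).trans ?_
      rw [abs_mul, abs_sub_comm]
      nlinarith [abs_nonneg (v - 1), abs_nonneg Eg]
    by_contra hcon
    push Not at hcon
    nlinarith [abs_nonneg (v - 1)]
  have hshift := gaussInt_shift z (2 * d) (by linarith)
  rw [gaussianReal_Iio]
  linarith

end BerryEsseen

/-! ### Hoeffding's inequality -/

section Hoeffding
variable {α : Type*} [Fintype α] {n : ℕ}

theorem mgf_bound {p h : α → ℝ} (hp : IsPMF p) (hh : fexp p h = 0) {R : ℝ} (hR : 0 < R)
    (hb : ∀ a, |h a| ≤ R) (t : ℝ) :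
    fexp p (fun a => Real.exp (t * h a)) ≤ Real.exp ((t * R) ^ 2 / 2) := by
  have hpt : ∀ a, Real.exp (t * h a)
      ≤ Real.cosh (t * R) + h a * (Real.sinh (t * R) / R) := by
    intro a
    obtain ⟨h1, h2⟩ := abs_le.1 (hb a)
    have hw1 : 0 ≤ (R + h a) / (2 * R) := div_nonneg (by linarith) (by linarith)
    have hw2 : 0 ≤ (R - h a) / (2 * R) := div_nonneg (by linarith) (by linarith)
    have hcv := convexOn_exp.2
    have hc := hcv (Set.mem_univ (t * R)) (Set.mem_univ (-(t * R))) hw1 hw2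
      (by field_simp; ring)
    simp only [smul_eq_mul] at hc
    have e1 : (R + h a) / (2 * R) * (t * R) + (R - h a) / (2 * R) * (-(t * R)) = t * h a := by
      field_simp; ring
    rw [e1] at hc
    refine hc.trans (le_of_eq ?_)
    rw [Real.cosh_eq, Real.sinh_eq]
    field_simp; ring
  calc _ ≤ fexp p (fun a => Real.cosh (t * R) + h a * (Real.sinh (t * R) / R)) :=
        fexp_mono hp hpt
    _ = Real.cosh (t * R) := by
        rw [fexp_add, fexp_const hp, fexp_mul_const, hh, zero_mul, add_zero]
    _ ≤ _ := Real.cosh_le_exp_half_sq _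

theorem fexp_piW_prod (p h : α → ℝ) :
    fexp (piW fun _ : Fin n => p) (fun y => ∏ i, h (y i)) = (fexp p h) ^ n := by
  unfold fexp piW
  simp only [← Finset.prod_mul_distrib]
  rw [← Fintype.prod_sum (fun (_ : Fin n) a => p a * h a)]
  simp

/-- Hoeffding's inequality for the lower tail of an i.i.d. sum over a finite alphabet. -/
theorem hoeffding_lower {p h : α → ℝ} (hp : IsPMF p) {R : ℝ} (hR : 0 < R)
    (hb : ∀ a, |h a - fexp p h| ≤ R) (hn : 0 < n) {s : ℝ} (hs : 0 ≤ s) :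
    fexp (piW fun _ : Fin n => p) (fun y => if ∑ i, h (y i) ≤ n * fexp p h - s then 1 else 0)
      ≤ Real.exp (-(s ^ 2 / (2 * n * R ^ 2))) := by
  have hn' : (0 : ℝ) < n := by exact_mod_cast hn
  set m := fexp p h with hm
  set t : ℝ := s / (n * R ^ 2) with ht
  have ht0 : 0 ≤ t := by positivity
  have hcent : fexp p (fun a => m - h a) = 0 := by
    rw [fexp_sub, fexp_const hp]; simp [hm]
  have hmgf := mgf_bound hp hcent hR (fun a => by rw [abs_sub_comm]; exact hb a) t
  have hpi : IsPMF (piW fun _ : Fin n => p) := isPMF_piW fun _ => hp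
  calc _ ≤ fexp (piW fun _ : Fin n => p)
          (fun y => Real.exp (-(t * s)) * ∏ i, Real.exp (t * (m - h (y i)))) := by
        refine fexp_mono hpi fun y => ?_
        rw [← Real.exp_sum, ← Real.exp_add]
        split_ifs with hy
        · rw [Real.one_le_exp_iff, ← Finset.mul_sum, Finset.sum_sub_distrib]
          simp only [Finset.sum_const, Finset.card_univ, Fintype.card_fin, nsmul_eq_mul]
          nlinarith
        · exact (Real.exp_pos _).le
    _ = Real.exp (-(t * s)) * (fexp p (fun a => Real.exp (t * (m - h a)))) ^ n := by
        rw [fexp_const_mul, fexp_piW_prod p (fun a => Real.exp (t * (m - h a)))]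
    _ ≤ Real.exp (-(t * s)) * (Real.exp ((t * R) ^ 2 / 2)) ^ n := by
        gcongr
        exact fexp_nonneg hp fun a => (Real.exp_pos _).le
    _ = Real.exp (-(s ^ 2 / (2 * n * R ^ 2))) := by
        rw [← Real.exp_nat_mul, ← Real.exp_add]
        congr 1
        rw [ht]
        field_simp
        ring

end Hoeffding

/-! ### Indicators -/

/-- The real-valued indicator of a proposition. -/
def ind (P : Prop) : ℝ := if P then 1 else 0

theorem ind_nonneg (P : Prop) : 0 ≤ ind P := by unfold ind; split_ifs <;> norm_num

theorem ind_le_one (P : Prop) : ind P ≤ 1 := by unfold ind; split_ifs <;> norm_num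

theorem ind_of {P : Prop} (h : P) : ind P = 1 := if_pos h

theorem ind_of_not {P : Prop} (h : ¬ P) : ind P = 0 := if_neg h

theorem ind_mono {P Q : Prop} (h : P → Q) : ind P ≤ ind Q := by
  by_cases hp : P
  · rw [ind_of hp, ind_of (h hp)]
  · rw [ind_of_not hp]; exact ind_nonneg _

theorem ind_or_le (P Q : Prop) : ind (P ∨ Q) ≤ ind P + ind Q := by
  by_cases hp : P
  · rw [ind_of (Or.inl hp), ind_of hp]; linarith [ind_nonneg Q]
  · rw [ind_of_not hp, zero_add]
    exact ind_mono fun h => h.resolve_left hp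

theorem ind_le_sum {κ : Type*} (s : Finset κ) {P : Prop} {Q : κ → Prop}
    (h : P → ∃ k ∈ s, Q k) : ind P ≤ ∑ k ∈ s, ind (Q k) := by
  by_cases hp : P
  · obtain ⟨k, hk, hq⟩ := h hp
    rw [ind_of hp, ← ind_of hq]
    exact Finset.single_le_sum (f := fun k => ind (Q k)) (fun k _ => ind_nonneg _) hk
  · rw [ind_of_not hp]; exact Finset.sum_nonneg fun k _ => ind_nonneg _

/-! ### Random coding with two senders -/

section RandomCoding
variable {A B Z : Type*} [Fintype A] [Fintype B] [Fintype Z]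

/-- One-shot random coding bound for a two-sender codebook with i.i.d. rows `α(m₁) ∼ PA`,
`β(m₂) ∼ PB` and a decoder that outputs some message pair passing the test `T`. -/
theorem random_coding {PA : A → ℝ} {PB : B → ℝ} (hA : IsPMF PA) (hB : IsPMF PB)
    {Q : A → B → Z → ℝ} (hQ : ∀ a b, IsPMF (Q a b)) (T : A → B → Z → Prop)
    {M1 M2 : ℕ} (hM1 : 0 < M1) (hM2 : 0 < M2) {e1 e2 e12 : ℝ}
    (h1 : ∀ b y, fexp PA (fun a => ind (T a b y)) ≤ e1)
    (h2 : ∀ a y, fexp PB (fun b => ind (T a b y)) ≤ e2)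
    (h12 : ∀ y, fexp PA (fun a => fexp PB (fun b => ind (T a b y))) ≤ e12) :
    ∃ (α : Fin M1 → A) (β : Fin M2 → B) (g : Z → Fin M1 × Fin M2),
      (1 / ((M1 : ℝ) * M2)) * ∑ m1, ∑ m2,
          fexp (Q (α m1) (β m2)) (fun y => ind (g y ≠ (m1, m2)))
        ≤ fexp PA (fun a => fexp PB (fun b => fexp (Q a b) (fun y => ind (¬ T a b y))))
          + M1 * e1 + M2 * e2 + M1 * M2 * e12 := by
  set E0 := fexp PA (fun a => fexp PB (fun b => fexp (Q a b) (fun y => ind (¬ T a b y)))) with hE0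
  have hM1' : (0 : ℝ) < M1 := by exact_mod_cast hM1
  have hM2' : (0 : ℝ) < M2 := by exact_mod_cast hM2
  have : Nonempty (Fin M1) := ⟨⟨0, hM1⟩⟩
  have : Nonempty (Fin M2) := ⟨⟨0, hM2⟩⟩
  have : Nonempty Z := by
    by_contra hne
    rw [not_nonempty_iff] at hne
    obtain ⟨a, -⟩ := exists_le_of_fexp_le hA (f := fun _ => 0) (c := 0) (by simp [fexp])
    obtain ⟨b, -⟩ := exists_le_of_fexp_le hB (f := fun _ => 0) (c := 0) (by simp [fexp])
    have := (hQ a b).2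
    simp at this
  obtain ⟨y0⟩ := ‹Nonempty Z›
  have he1 : 0 ≤ e1 := by
    obtain ⟨b, -⟩ := exists_le_of_fexp_le hB (f := fun _ => 0) (c := 0) (by simp [fexp])
    exact (fexp_nonneg hA fun a => ind_nonneg _).trans (h1 b y0)
  have he2 : 0 ≤ e2 := by
    obtain ⟨a, -⟩ := exists_le_of_fexp_le hA (f := fun _ => 0) (c := 0) (by simp [fexp])
    exact (fexp_nonneg hB fun a => ind_nonneg _).trans (h2 a y0)
  have he12 : 0 ≤ e12 :=
    (fexp_nonneg hA fun a => fexp_nonneg hB fun b => ind_nonneg _).trans (h12 y0)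
  let g : (Fin M1 → A) → (Fin M2 → B) → Z → Fin M1 × Fin M2 := fun α β y =>
    if h : ∃ m : Fin M1 × Fin M2, T (α m.1) (β m.2) y then h.choose else Classical.arbitrary _
  have hpt : ∀ α β y m1 m2, ind (g α β y ≠ (m1, m2)) ≤ ind (¬ T (α m1) (β m2) y)
      + ∑ m1' ∈ Finset.univ.erase m1, ind (T (α m1') (β m2) y)
      + ∑ m2' ∈ Finset.univ.erase m2, ind (T (α m1) (β m2') y)
      + ∑ m1' ∈ Finset.univ.erase m1, ∑ m2' ∈ Finset.univ.erase m2,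
          ind (T (α m1') (β m2') y) := by
    intro α β y m1 m2
    have key : g α β y ≠ (m1, m2) →
        ((¬ T (α m1) (β m2) y ∨ ∃ m1' ∈ Finset.univ.erase m1, T (α m1') (β m2) y)
          ∨ ∃ m2' ∈ Finset.univ.erase m2, T (α m1) (β m2') y)
          ∨ ∃ m1' ∈ Finset.univ.erase m1, ∃ m2' ∈ Finset.univ.erase m2,
            T (α m1') (β m2') y := by
      intro hne
      by_cases hT : T (α m1) (β m2) y
      · have hex : ∃ m : Fin M1 × Fin M2, T (α m.1) (β m.2) y := ⟨(m1, m2), hT⟩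
        have hg : T (α (g α β y).1) (β (g α β y).2) y := by
          have hgy : g α β y = hex.choose := dif_pos hex
          rw [hgy]; exact hex.choose_spec
        generalize g α β y = m at hne hg
        obtain ⟨a, b⟩ := m
        simp only at hg
        by_cases ha : a = m1
        · by_cases hb : b = m2
          · exact absurd (by rw [ha, hb]) hne
          · exact Or.inl (Or.inr ⟨b, by simp [hb], by rw [← ha]; exact hg⟩)
        · by_cases hb : b = m2
          · exact Or.inl (Or.inl (Or.inr ⟨a, by simp [ha], by rw [← hb]; exact hg⟩))
          · exact Or.inr ⟨a, by simp [ha], b, by simp [hb], hg⟩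
      · exact Or.inl (Or.inl (Or.inl hT))
    refine (ind_mono key).trans ?_
    refine (ind_or_le _ _).trans (add_le_add ((ind_or_le _ _).trans (add_le_add
      ((ind_or_le _ _).trans (add_le_add le_rfl ?_)) ?_)) ?_)
    · exact ind_le_sum _ id
    · exact ind_le_sum _ id
    · refine (ind_le_sum _ (Q := fun m1' => ∃ m2' ∈ Finset.univ.erase m2,
        T (α m1') (β m2') y) id).trans (Finset.sum_le_sum fun m1' _ => ind_le_sum _ id)
  have hpA : IsPMF (piW fun _ : Fin M1 => PA) := isPMF_piW fun _ => hA
  have hpB : IsPMF (piW fun _ : Fin M2 => PB) := isPMF_piW fun _ => hB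
  have hcard1 : ∀ m : Fin M1, ((Finset.univ.erase m).card : ℝ) ≤ M1 := by
    intro m
    have := Finset.card_erase_le (s := (Finset.univ : Finset (Fin M1))) (a := m)
    rw [Finset.card_univ, Fintype.card_fin] at this
    exact_mod_cast this
  have hcard2 : ∀ m : Fin M2, ((Finset.univ.erase m).card : ℝ) ≤ M2 := by
    intro m
    have := Finset.card_erase_le (s := (Finset.univ : Finset (Fin M2))) (a := m)
    rw [Finset.card_univ, Fintype.card_fin] at this
    exact_mod_cast this
  -- average over the codebook, for a fixed message pair
  have hm : ∀ m1 m2, fexp (piW fun _ : Fin M1 => PA) (fun α => fexp (piW fun _ : Fin M2 => PB)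
      (fun β => fexp (Q (α m1) (β m2)) (fun y => ind (g α β y ≠ (m1, m2)))))
        ≤ E0 + M1 * e1 + M2 * e2 + M1 * M2 * e12 := by
    intro m1 m2
    have t0 : fexp (piW fun _ : Fin M1 => PA) (fun α => fexp (piW fun _ : Fin M2 => PB)
        (fun β => fexp (Q (α m1) (β m2)) (fun y => ind (¬ T (α m1) (β m2) y)))) = E0 := by
      rw [hE0, ← fexp_marginal (fun _ : Fin M1 => hA) m1]
      congr 1; funext α
      exact fexp_marginal (fun _ : Fin M2 => hB) m2
        (fun b => fexp (Q (α m1) b) (fun y => ind (¬ T (α m1) b y)))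
    have t1 : ∀ m1' ∈ Finset.univ.erase m1, fexp (piW fun _ : Fin M1 => PA) (fun α =>
        fexp (piW fun _ : Fin M2 => PB)
        (fun β => fexp (Q (α m1) (β m2)) (fun y => ind (T (α m1') (β m2) y)))) ≤ e1 := by
      intro m1' hm1'
      have hne : m1 ≠ m1' := (Finset.ne_of_mem_erase hm1').symm
      rw [fexp_comm]
      calc _ ≤ fexp (piW fun _ : Fin M2 => PB) (fun _ => e1) := by
            refine fexp_mono hpB fun β => ?_
            rw [fexp_marginal₂ (fun _ : Fin M1 => hA) hne
              (fun a a' => fexp (Q a (β m2)) (fun y => ind (T a' (β m2) y)))]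
            calc _ ≤ fexp PA (fun _ => e1) := by
                  refine fexp_mono hA fun a => ?_
                  rw [fexp_comm]
                  calc _ ≤ fexp (Q a (β m2)) (fun _ => e1) :=
                        fexp_mono (hQ _ _) fun y => h1 _ _
                    _ = e1 := fexp_const (hQ _ _) _
              _ = e1 := fexp_const hA _
        _ = e1 := fexp_const hpB _
    have t2 : ∀ m2' ∈ Finset.univ.erase m2, fexp (piW fun _ : Fin M1 => PA) (fun α =>
        fexp (piW fun _ : Fin M2 => PB)
        (fun β => fexp (Q (α m1) (β m2)) (fun y => ind (T (α m1) (β m2') y)))) ≤ e2 := by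
      intro m2' hm2'
      have hne : m2 ≠ m2' := (Finset.ne_of_mem_erase hm2').symm
      calc _ ≤ fexp (piW fun _ : Fin M1 => PA) (fun _ => e2) := by
            refine fexp_mono hpA fun α => ?_
            rw [fexp_marginal₂ (fun _ : Fin M2 => hB) hne
              (fun b b' => fexp (Q (α m1) b) (fun y => ind (T (α m1) b' y)))]
            calc _ ≤ fexp PB (fun _ => e2) := by
                  refine fexp_mono hB fun b => ?_
                  rw [fexp_comm]
                  calc _ ≤ fexp (Q (α m1) b) (fun _ => e2) :=
                        fexp_mono (hQ _ _) fun y => h2 _ _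
                    _ = e2 := fexp_const (hQ _ _) _
              _ = e2 := fexp_const hB _
        _ = e2 := fexp_const hpA _
    have t12 : ∀ m1' ∈ Finset.univ.erase m1, ∀ m2' ∈ Finset.univ.erase m2,
        fexp (piW fun _ : Fin M1 => PA) (fun α => fexp (piW fun _ : Fin M2 => PB)
        (fun β => fexp (Q (α m1) (β m2)) (fun y => ind (T (α m1') (β m2') y)))) ≤ e12 := by
      intro m1' hm1' m2' hm2'
      have hne1 : m1 ≠ m1' := (Finset.ne_of_mem_erase hm1').symm
      have hne2 : m2 ≠ m2' := (Finset.ne_of_mem_erase hm2').symm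
      have e : ∀ α : Fin M1 → A, fexp (piW fun _ : Fin M2 => PB)
          (fun β => fexp (Q (α m1) (β m2)) (fun y => ind (T (α m1') (β m2') y)))
          = fexp PB (fun b => fexp (Q (α m1) b)
              (fun y => fexp PB (fun b' => ind (T (α m1') b' y)))) := by
        intro α
        rw [fexp_marginal₂ (fun _ : Fin M2 => hB) hne2
          (fun b b' => fexp (Q (α m1) b) (fun y => ind (T (α m1') b' y)))]
        congr 1; funext b
        rw [fexp_comm]
      simp only [e]
      rw [fexp_marginal₂ (fun _ : Fin M1 => hA) hne1 (fun a a' => fexp PB (fun b => fexp (Q a b)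
              (fun y => fexp PB (fun b' => ind (T a' b' y)))))]
      calc _ ≤ fexp PA (fun _ => e12) := by
            refine fexp_mono hA fun a => ?_
            rw [fexp_comm]
            calc _ ≤ fexp PB (fun _ => e12) := by
                  refine fexp_mono hB fun b => ?_
                  rw [fexp_comm]
                  calc _ ≤ fexp (Q a b) (fun _ => e12) :=
                        fexp_mono (hQ _ _) fun y => h12 _
                    _ = e12 := fexp_const (hQ _ _) _
              _ = e12 := fexp_const hB _
        _ = e12 := fexp_const hA _
    calc _ ≤ fexp (piW fun _ : Fin M1 => PA) (fun α => fexp (piW fun _ : Fin M2 => PB)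
          (fun β => fexp (Q (α m1) (β m2)) (fun y => ind (¬ T (α m1) (β m2) y)
            + ∑ m1' ∈ Finset.univ.erase m1, ind (T (α m1') (β m2) y)
            + ∑ m2' ∈ Finset.univ.erase m2, ind (T (α m1) (β m2') y)
            + ∑ m1' ∈ Finset.univ.erase m1, ∑ m2' ∈ Finset.univ.erase m2,
                ind (T (α m1') (β m2') y)))) :=
          fexp_mono hpA fun α => fexp_mono hpB fun β => fexp_mono (hQ _ _) fun y =>
            hpt α β y m1 m2
      _ ≤ E0 + ∑ m1' ∈ Finset.univ.erase m1, e1 + ∑ m2' ∈ Finset.univ.erase m2, e2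
            + ∑ m1' ∈ Finset.univ.erase m1, ∑ m2' ∈ Finset.univ.erase m2, e12 := by
          simp only [fexp_add, fexp_sum]
          rw [t0]
          exact add_le_add (add_le_add (add_le_add le_rfl (Finset.sum_le_sum t1))
            (Finset.sum_le_sum t2))
            (Finset.sum_le_sum fun m1' hm1' => Finset.sum_le_sum (t12 m1' hm1'))
      _ ≤ E0 + M1 * e1 + M2 * e2 + M1 * M2 * e12 := by
          simp only [Finset.sum_const, nsmul_eq_mul]
          have a1 := mul_le_mul_of_nonneg_right (hcard1 m1) he1
          have a2 := mul_le_mul_of_nonneg_right (hcard2 m2) he2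
          have a3 := mul_le_mul_of_nonneg_right (hcard2 m2) he12
          have a4 : ((Finset.univ.erase m1).card : ℝ) * (((Finset.univ.erase m2).card : ℝ) * e12)
              ≤ M1 * (M2 * e12) :=
            mul_le_mul (hcard1 m1) a3 (mul_nonneg (Nat.cast_nonneg _) he12) hM1'.le
          rw [← mul_assoc (M1 : ℝ)] at a4
          linarith
  have havg : fexp (piW fun _ : Fin M1 => PA) (fun α => fexp (piW fun _ : Fin M2 => PB)
      (fun β => (1 / ((M1 : ℝ) * M2)) * ∑ m1, ∑ m2,
          fexp (Q (α m1) (β m2)) (fun y => ind (g α β y ≠ (m1, m2)))))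
        ≤ E0 + M1 * e1 + M2 * e2 + M1 * M2 * e12 := by
    simp only [fexp_const_mul, fexp_sum]
    calc _ ≤ (1 / ((M1 : ℝ) * M2)) * ∑ m1 : Fin M1, ∑ m2 : Fin M2,
          (E0 + M1 * e1 + M2 * e2 + M1 * M2 * e12) := by
          gcongr with m1 _ m2 _
          exact hm m1 m2
      _ = _ := by
          simp only [Finset.sum_const, Finset.card_univ, Fintype.card_fin, nsmul_eq_mul]
          field_simp
  obtain ⟨α, hα⟩ := exists_le_of_fexp_le hpA havg
  obtain ⟨β, hβ⟩ := exists_le_of_fexp_le hpB hα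
  exact ⟨α, β, g α β, hβ⟩

end RandomCoding

/-! ### Product weights on pairs and likelihood ratios -/

section ProductForm
variable {α β : Type*} [Fintype α] [Fintype β] {n : ℕ}

/-- Drawing `x` from a product weight and then each `yᵢ` given `xᵢ` amounts to drawing the pairs
`(xᵢ, yᵢ)` independently. -/
theorem fexp_piW_pair (p : Fin n → α → ℝ) (q : Fin n → α → β → ℝ) (G : (Fin n → α × β) → ℝ) :
    fexp (piW p) (fun x => fexp (piW fun i => q i (x i)) (fun y => G fun i => (x i, y i)))
      = fexp (piW fun i (c : α × β) => p i c.1 * q i c.1 c.2) G := by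
  have h : fexp (piW fun i (c : α × β) => p i c.1 * q i c.1 c.2) G
      = ∑ c : (Fin n → α) × (Fin n → β), (piW p c.1 * piW (fun i => q i (c.1 i)) c.2)
          * G (fun i => (c.1 i, c.2 i)) := by
    unfold fexp
    refine Fintype.sum_equiv (Equiv.arrowProdEquivProdArrow (Fin n) (fun _ => α) (fun _ => β))
      _ _ fun c => ?_
    simp [piW, Equiv.arrowProdEquivProdArrow, Finset.prod_mul_distrib]
  rw [h, Fintype.sum_prod_type]
  simp only [fexp, Finset.mul_sum, mul_assoc]

theorem isPMF_pair {p : α → ℝ} {q : α → β → ℝ} (hp : IsPMF p) (hq : ∀ a, IsPMF (q a)) :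
    IsPMF (fun c : α × β => p c.1 * q c.1 c.2) := by
  refine ⟨fun c => mul_nonneg (hp.1 _) ((hq _).1 _), ?_⟩
  rw [Fintype.sum_prod_type]
  simp only [← Finset.mul_sum, (hq _).2, mul_one, hp.2]

theorem fexp_pair (p : α → ℝ) (q : α → β → ℝ) (h : α × β → ℝ) :
    fexp (fun c : α × β => p c.1 * q c.1 c.2) h
      = fexp p (fun a => fexp (q a) (fun b => h (a, b))) := by
  unfold fexp
  rw [Fintype.sum_prod_type]
  simp only [Finset.mul_sum, mul_assoc]

theorem exists_abs_bound {γ : Type*} [Fintype γ] (h : γ → ℝ) :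
    ∃ R : ℝ, 1 ≤ R ∧ ∀ c, |h c| ≤ R := by
  have h0 : 0 ≤ ∑ c, |h c| := Finset.sum_nonneg fun c _ => abs_nonneg _
  refine ⟨1 + ∑ c, |h c|, by linarith, fun c => ?_⟩
  have := Finset.single_le_sum (f := fun c => |h c|) (fun c _ => abs_nonneg _) (Finset.mem_univ c)
  linarith

/-- Change of measure: a likelihood-ratio test at level `Θ` has false-alarm indicator
dominated by the scaled likelihood ratio. -/
theorem ind_ratio_le {f c Θ : ℝ} (hf : 0 ≤ f) (hc : 0 ≤ c) (hΘ : 0 < Θ) :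
    ind (0 < c ∧ Θ * c ≤ f) ≤ (Θ * c)⁻¹ * f := by
  by_cases h : 0 < c ∧ Θ * c ≤ f
  · rw [ind_of h, ← div_eq_inv_mul, one_le_div (mul_pos hΘ h.1)]
    exact h.2
  · rw [ind_of_not h]
    exact mul_nonneg (inv_nonneg.2 (mul_nonneg hΘ.le hc)) hf

theorem inv_mul_mul_le {c Θ : ℝ} (hc : 0 ≤ c) (hΘ : 0 < Θ) : (Θ * c)⁻¹ * c ≤ 1 / Θ := by
  rcases hc.eq_or_lt with h | h
  · rw [← h]; simp; positivity
  · exact le_of_eq (by field_simp)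

/-- Failing a likelihood-ratio test at level `Θ` bounds the sum of the log-ratios. -/
theorem sum_logb_lt {f g : Fin n → ℝ} (hf : ∀ i, 0 < f i) (hg : ∀ i, 0 < g i) {Θ : ℝ}
    (h : ¬ (0 < ∏ i, g i ∧ Θ * ∏ i, g i ≤ ∏ i, f i)) :
    ∑ i, Real.logb 2 (f i / g i) < Real.logb 2 Θ := by
  have hG : 0 < ∏ i, g i := Finset.prod_pos fun i _ => hg i
  have hF : 0 < ∏ i, f i := Finset.prod_pos fun i _ => hf i
  have hlt : ∏ i, f i < Θ * ∏ i, g i := by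
    by_contra hcon
    exact h ⟨hG, not_lt.1 hcon⟩
  rw [← Real.logb_prod _ _ fun i _ => (div_pos (hf i) (hg i)).ne', Finset.prod_div_distrib]
  refine Real.logb_lt_logb (by norm_num) (div_pos hF hG) ?_
  rwa [div_lt_iff₀ hG]

end ProductForm

/-! ### The block channel, the decoder's test and its error events -/

section Block
variable {n : ℕ}

/-- The law of the output block given the input blocks. -/
def blockW (W : X1 → X2 → Y → ℝ) (x1 : Fin n → X1) (x2 : Fin n → X2) : (Fin n → Y) → ℝ :=
  piW fun i => W (x1 i) (x2 i)

theorem IsChannel.isPMF {W : X1 → X2 → Y → ℝ} (hW : IsChannel W) (x1 : X1) (x2 : X2) :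
    IsPMF (W x1 x2) := ⟨hW.1 x1 x2, hW.2 x1 x2⟩

theorem isPMF_blockW {W : X1 → X2 → Y → ℝ} (hW : IsChannel W) (x1 : Fin n → X1)
    (x2 : Fin n → X2) : IsPMF (blockW W x1 x2) := isPMF_piW fun _ => hW.isPMF _ _

theorem fexp_blockW_left (W : X1 → X2 → Y → ℝ) (p1 : X1 → ℝ) (x2 : Fin n → X2)
    (y : Fin n → Y) :
    fexp (piW fun _ : Fin n => p1) (fun x1 => blockW W x1 x2 y)
      = ∏ i, condOut2 W p1 (x2 i) (y i) := by
  unfold fexp piW blockW piW condOut2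
  simp only [← Finset.prod_mul_distrib]
  rw [← Fintype.prod_sum (fun (i : Fin n) x => p1 x * W x (x2 i) (y i))]

theorem fexp_blockW_right (W : X1 → X2 → Y → ℝ) (p2 : X2 → ℝ) (x1 : Fin n → X1)
    (y : Fin n → Y) :
    fexp (piW fun _ : Fin n => p2) (fun x2 => blockW W x1 x2 y)
      = ∏ i, condOut1 W p2 (x1 i) (y i) := by
  unfold fexp piW blockW piW condOut1
  simp only [← Finset.prod_mul_distrib]
  rw [← Fintype.prod_sum (fun (i : Fin n) x => p2 x * W (x1 i) x (y i))]

theorem fexp_blockW_both (W : X1 → X2 → Y → ℝ) (p1 : X1 → ℝ) (p2 : X2 → ℝ)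
    (y : Fin n → Y) :
    fexp (piW fun _ : Fin n => p1) (fun x1 => fexp (piW fun _ : Fin n => p2)
      (fun x2 => blockW W x1 x2 y)) = ∏ i, outDist W p1 p2 (y i) := by
  simp only [fexp_blockW_right]
  unfold fexp piW
  simp only [← Finset.prod_mul_distrib]
  rw [← Fintype.prod_sum (fun (i : Fin n) x => p1 x * condOut1 W p2 x (y i))]
  simp only [condOut1, outDist, Finset.mul_sum, mul_assoc]

/-- The decoder's test: the joint and both conditional likelihood ratios reach their
thresholds. The positivity clauses exclude output blocks of probability zero. -/
def passTest (W : X1 → X2 → Y → ℝ) (p1 : X1 → ℝ) (p2 : X2 → ℝ) (Θ Θ1 Θ2 : ℝ)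
    (x1 : Fin n → X1) (x2 : Fin n → X2) (y : Fin n → Y) : Prop :=
  (0 < ∏ i, outDist W p1 p2 (y i) ∧
      Θ * ∏ i, outDist W p1 p2 (y i) ≤ ∏ i, W (x1 i) (x2 i) (y i)) ∧
    (0 < ∏ i, condOut2 W p1 (x2 i) (y i) ∧
      Θ1 * ∏ i, condOut2 W p1 (x2 i) (y i) ≤ ∏ i, W (x1 i) (x2 i) (y i)) ∧
    (0 < ∏ i, condOut1 W p2 (x1 i) (y i) ∧
      Θ2 * ∏ i, condOut1 W p2 (x1 i) (y i) ≤ ∏ i, W (x1 i) (x2 i) (y i))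

variable {W : X1 → X2 → Y → ℝ} {p1 : X1 → ℝ} {p2 : X2 → ℝ} {K : ℕ}

theorem false_alarm_one (hW : IsChannel W) (hp1 : IsPMF p1) {Θ Θ1 Θ2 : ℝ} (hΘ : 0 < Θ1)
    (b : Fin K → Fin n → X2) (y : Fin n → Y) :
    fexp (piW fun _ : Fin K => piW fun _ : Fin n => p1)
      (fun a => ind (∃ k, passTest W p1 p2 Θ Θ1 Θ2 (a k) (b k) y)) ≤ K * (1 / Θ1) := by
  have hP : IsPMF (piW fun _ : Fin n => p1) := isPMF_piW fun _ => hp1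
  have hc : ∀ k, 0 ≤ ∏ i, condOut2 W p1 (b k i) (y i) := fun k =>
    Finset.prod_nonneg fun i _ => Finset.sum_nonneg fun x _ => mul_nonneg (hp1.1 x) (hW.1 _ _ _)
  calc _ ≤ fexp (piW fun _ : Fin K => piW fun _ : Fin n => p1)
        (fun a => ∑ k, (Θ1 * ∏ i, condOut2 W p1 (b k i) (y i))⁻¹ * blockW W (a k) (b k) y) := by
        refine fexp_mono (isPMF_piW fun _ => hP) fun a => ?_
        refine (ind_le_sum Finset.univ (fun ⟨k, hk⟩ => ⟨k, Finset.mem_univ k, hk.2.1⟩)).trans ?_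
        exact Finset.sum_le_sum fun k _ =>
          ind_ratio_le ((isPMF_blockW hW (a k) (b k)).1 y) (hc k) hΘ
    _ = ∑ k, (Θ1 * ∏ i, condOut2 W p1 (b k i) (y i))⁻¹
          * ∏ i, condOut2 W p1 (b k i) (y i) := by
        rw [fexp_sum]
        refine Finset.sum_congr rfl fun k _ => ?_
        rw [fexp_const_mul, fexp_marginal (fun _ : Fin K => hP) k
          (fun x => blockW W x (b k) y), fexp_blockW_left]
    _ ≤ ∑ _k : Fin K, 1 / Θ1 := Finset.sum_le_sum fun k _ => inv_mul_mul_le (hc k) hΘ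
    _ = K * (1 / Θ1) := by simp

theorem false_alarm_two (hW : IsChannel W) (hp2 : IsPMF p2) {Θ Θ1 Θ2 : ℝ} (hΘ : 0 < Θ2)
    (a : Fin K → Fin n → X1) (y : Fin n → Y) :
    fexp (piW fun _ : Fin K => piW fun _ : Fin n => p2)
      (fun b => ind (∃ k, passTest W p1 p2 Θ Θ1 Θ2 (a k) (b k) y)) ≤ K * (1 / Θ2) := by
  have hP : IsPMF (piW fun _ : Fin n => p2) := isPMF_piW fun _ => hp2
  have hc : ∀ k, 0 ≤ ∏ i, condOut1 W p2 (a k i) (y i) := fun k =>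
    Finset.prod_nonneg fun i _ => Finset.sum_nonneg fun x _ => mul_nonneg (hp2.1 x) (hW.1 _ _ _)
  calc _ ≤ fexp (piW fun _ : Fin K => piW fun _ : Fin n => p2)
        (fun b => ∑ k, (Θ2 * ∏ i, condOut1 W p2 (a k i) (y i))⁻¹ * blockW W (a k) (b k) y) := by
        refine fexp_mono (isPMF_piW fun _ => hP) fun b => ?_
        refine (ind_le_sum Finset.univ (fun ⟨k, hk⟩ => ⟨k, Finset.mem_univ k, hk.2.2⟩)).trans ?_
        exact Finset.sum_le_sum fun k _ =>
          ind_ratio_le ((isPMF_blockW hW (a k) (b k)).1 y) (hc k) hΘ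
    _ = ∑ k, (Θ2 * ∏ i, condOut1 W p2 (a k i) (y i))⁻¹
          * ∏ i, condOut1 W p2 (a k i) (y i) := by
        rw [fexp_sum]
        refine Finset.sum_congr rfl fun k _ => ?_
        rw [fexp_const_mul, fexp_marginal (fun _ : Fin K => hP) k
          (fun x => blockW W (a k) x y), fexp_blockW_right]
    _ ≤ ∑ _k : Fin K, 1 / Θ2 := Finset.sum_le_sum fun k _ => inv_mul_mul_le (hc k) hΘ
    _ = K * (1 / Θ2) := by simp

/-- A function of column `k` of the two codebook rows only sees the law of one column. -/
theorem fexp_rows_column {PA : (Fin n → X1) → ℝ} {PB : (Fin n → X2) → ℝ} (hA : IsPMF PA)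
    (hB : IsPMF PB) (k : Fin K) (F : (Fin n → X1) → (Fin n → X2) → ℝ) :
    fexp (piW fun _ : Fin K => PA) (fun a => fexp (piW fun _ : Fin K => PB)
      (fun b => F (a k) (b k))) = fexp PA (fun x1 => fexp PB (fun x2 => F x1 x2)) := by
  rw [← fexp_marginal (fun _ : Fin K => hA) k]
  congr 1; funext a
  exact fexp_marginal (fun _ : Fin K => hB) k (fun x2 => F (a k) x2)

theorem false_alarm_both (hW : IsChannel W) (hp1 : IsPMF p1) (hp2 : IsPMF p2) {Θ Θ1 Θ2 : ℝ}
    (hΘ : 0 < Θ) (y : Fin n → Y) :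
    fexp (piW fun _ : Fin K => piW fun _ : Fin n => p1) (fun a =>
      fexp (piW fun _ : Fin K => piW fun _ : Fin n => p2)
        (fun b => ind (∃ k, passTest W p1 p2 Θ Θ1 Θ2 (a k) (b k) y))) ≤ K * (1 / Θ) := by
  have hP1 : IsPMF (piW fun _ : Fin n => p1) := isPMF_piW fun _ => hp1
  have hP2 : IsPMF (piW fun _ : Fin n => p2) := isPMF_piW fun _ => hp2
  have hc : 0 ≤ ∏ i, outDist W p1 p2 (y i) :=
    Finset.prod_nonneg fun i _ => Finset.sum_nonneg fun x _ => Finset.sum_nonneg fun x' _ =>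
      mul_nonneg (mul_nonneg (hp1.1 x) (hp2.1 x')) (hW.1 _ _ _)
  calc _ ≤ fexp (piW fun _ : Fin K => piW fun _ : Fin n => p1) (fun a =>
          fexp (piW fun _ : Fin K => piW fun _ : Fin n => p2)
          (fun b => ∑ k, (Θ * ∏ i, outDist W p1 p2 (y i))⁻¹ * blockW W (a k) (b k) y)) := by
        refine fexp_mono (isPMF_piW fun _ => hP1) fun a =>
          fexp_mono (isPMF_piW fun _ => hP2) fun b => ?_
        refine (ind_le_sum Finset.univ (fun ⟨k, hk⟩ => ⟨k, Finset.mem_univ k, hk.1⟩)).trans ?_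
        exact Finset.sum_le_sum fun k _ =>
          ind_ratio_le ((isPMF_blockW hW (a k) (b k)).1 y) hc hΘ
    _ = ∑ _k : Fin K, (Θ * ∏ i, outDist W p1 p2 (y i))⁻¹ * ∏ i, outDist W p1 p2 (y i) := by
        simp only [fexp_sum, fexp_const_mul]
        refine Finset.sum_congr rfl fun k _ => ?_
        rw [fexp_rows_column hP1 hP2 k (fun x1 x2 => blockW W x1 x2 y), fexp_blockW_both]
    _ ≤ ∑ _k : Fin K, 1 / Θ := Finset.sum_le_sum fun k _ => inv_mul_mul_le hc hΘ
    _ = K * (1 / Θ) := by simp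

theorem pos_of_piW_pos {ι α : Type*} [Fintype ι] {w : ι → α → ℝ} (hw : ∀ i a, 0 ≤ w i a)
    {y : ι → α} (h : 0 < piW w y) (i : ι) : 0 < w i (y i) := by
  refine lt_of_le_of_ne (hw _ _) fun h0 => h.ne' ?_
  exact Finset.prod_eq_zero (Finset.mem_univ i) h0.symm

/-- On the support, a failed test means that one of the information densities is too small. -/
theorem not_passTest (hW : IsChannel W) (hp1 : IsPMF p1) (hp2 : IsPMF p2) {Θ Θ1 Θ2 : ℝ}
    {x1 : Fin n → X1} {x2 : Fin n → X2} {y : Fin n → Y} (h1 : ∀ i, 0 < p1 (x1 i))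
    (h2 : ∀ i, 0 < p2 (x2 i)) (hy : ∀ i, 0 < W (x1 i) (x2 i) (y i))
    (h : ¬ passTest W p1 p2 Θ Θ1 Θ2 x1 x2 y) :
    (∑ i, iDens W p1 p2 (x1 i) (x2 i) (y i) < Real.logb 2 Θ ∨
      ∑ i, iDensC1 W p1 (x1 i) (x2 i) (y i) < Real.logb 2 Θ1) ∨
      ∑ i, iDensC2 W p2 (x1 i) (x2 i) (y i) < Real.logb 2 Θ2 := by
  have c2 : ∀ i, 0 < condOut2 W p1 (x2 i) (y i) := fun i =>
    Finset.sum_pos' (fun x _ => mul_nonneg (hp1.1 x) (hW.1 _ _ _))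
      ⟨x1 i, Finset.mem_univ _, mul_pos (h1 i) (hy i)⟩
  have c1 : ∀ i, 0 < condOut1 W p2 (x1 i) (y i) := fun i =>
    Finset.sum_pos' (fun x _ => mul_nonneg (hp2.1 x) (hW.1 _ _ _))
      ⟨x2 i, Finset.mem_univ _, mul_pos (h2 i) (hy i)⟩
  have c0 : ∀ i, 0 < outDist W p1 p2 (y i) := fun i =>
    Finset.sum_pos' (fun x _ => Finset.sum_nonneg fun x' _ =>
        mul_nonneg (mul_nonneg (hp1.1 x) (hp2.1 x')) (hW.1 _ _ _))
      ⟨x1 i, Finset.mem_univ _, Finset.sum_pos'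
        (fun x' _ => mul_nonneg (mul_nonneg (hp1.1 _) (hp2.1 x')) (hW.1 _ _ _))
        ⟨x2 i, Finset.mem_univ _, mul_pos (mul_pos (h1 i) (h2 i)) (hy i)⟩⟩
  unfold passTest at h
  rcases not_and_or.1 h with h | h
  · exact Or.inl (Or.inl (sum_logb_lt hy c0 h))
  rcases not_and_or.1 h with h | h
  · exact Or.inl (Or.inr (sum_logb_lt hy c2 h))
  · exact Or.inr (sum_logb_lt hy c1 h)

/-- Hoeffding's inequality for `∑ᵢ h(X₁ᵢ, X₂ᵢ, Yᵢ)` with i.i.d. triples. -/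
theorem triple_tail (hW : IsChannel W) (hp1 : IsPMF p1) (hp2 : IsPMF p2)
    (h : X1 → X2 → Y → ℝ) {m R s γ : ℝ}
    (hm : m = ∑ x1, ∑ x2, ∑ y, p1 x1 * p2 x2 * W x1 x2 y * h x1 x2 y)
    (hR : 0 < R) (hb : ∀ x1 x2 y, |h x1 x2 y - m| ≤ R) (hn : 0 < n) (hs : 0 ≤ s)
    (hγ : γ ≤ n * m - s) :
    fexp (piW fun _ : Fin n => p1) (fun x1 => fexp (piW fun _ : Fin n => p2) (fun x2 =>
      fexp (blockW W x1 x2) (fun y => ind (∑ i, h (x1 i) (x2 i) (y i) < γ))))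
      ≤ Real.exp (-(s ^ 2 / (2 * n * R ^ 2))) := by
  set q : X1 → X2 × Y → ℝ := fun x1 c => p2 c.1 * W x1 c.1 c.2 with hq
  set P : X1 × X2 × Y → ℝ := fun c => p1 c.1 * q c.1 c.2 with hPdef
  have hP : IsPMF P := isPMF_pair hp1 fun x1 => isPMF_pair hp2 fun x2 => hW.isPMF x1 x2
  set H : X1 × X2 × Y → ℝ := fun c => h c.1 c.2.1 c.2.2 with hH
  have hmean : fexp P H = m := by
    rw [hm, hPdef, fexp_pair]
    simp only [hq, fexp_pair p2 (W _)]
    simp only [fexp, hH, Finset.mul_sum, mul_assoc]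
  have key := hoeffding_lower (n := n) hP (h := H) hR
    (fun c => by rw [hmean]; exact hb _ _ _) hn hs
  rw [hmean] at key
  refine le_trans (le_of_eq ?_) (le_trans (fexp_mono (isPMF_piW fun _ => hP)
    (f := fun c => ind (∑ i, H (c i) < γ)) fun c => ?_) key)
  · rw [hPdef, ← fexp_piW_pair (fun _ : Fin n => p1) (fun _ => q)]
    congr 1; funext x1
    have := fexp_piW_pair (fun _ : Fin n => p2) (fun i => W (x1 i))
      (fun c => ind (∑ i, H (x1 i, c i) < γ))
    exact this
  · exact ind_mono fun hlt => (hlt.le.trans hγ)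

/-- Two-sided Hoeffding inequality for `∑ᵢ h(X₁ᵢ, X₂ᵢ)` with i.i.d. pairs. -/
theorem pair_tail (hp1 : IsPMF p1) (hp2 : IsPMF p2)
    (h : X1 → X2 → ℝ) {m R s : ℝ} (hm : m = ∑ x1, ∑ x2, p1 x1 * p2 x2 * h x1 x2)
    (hR : 0 < R) (hb : ∀ x1 x2, |h x1 x2 - m| ≤ R) (hn : 0 < n) (hs : 0 ≤ s) :
    fexp (piW fun _ : Fin n => p1) (fun x1 => fexp (piW fun _ : Fin n => p2) (fun x2 =>
      ind (s < |∑ i, h (x1 i) (x2 i) - n * m|)))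
      ≤ 2 * Real.exp (-(s ^ 2 / (2 * n * R ^ 2))) := by
  set P : X1 × X2 → ℝ := fun c => p1 c.1 * p2 c.2 with hPdef
  have hP : IsPMF P := isPMF_pair hp1 fun _ => hp2
  set H : X1 × X2 → ℝ := fun c => h c.1 c.2 with hH
  have hmean : fexp P H = m := by
    rw [hm, hPdef, fexp_pair p1 (fun _ => p2)]
    simp only [fexp, hH, Finset.mul_sum, mul_assoc]
  have hmean' : fexp P (fun c => -H c) = -m := by
    rw [← hmean, ← neg_one_mul, ← fexp_const_mul]; simp
  have key1 := hoeffding_lower (n := n) hP (h := H) hR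
    (fun c => by rw [hmean]; exact hb _ _) hn hs
  have key2 := hoeffding_lower (n := n) hP (h := fun c => - H c) hR
    (fun c => by rw [hmean', ← neg_sub', abs_neg]; exact hb _ _) hn hs
  rw [hmean] at key1
  rw [hmean'] at key2
  have hconv : fexp (piW fun _ : Fin n => p1) (fun x1 => fexp (piW fun _ : Fin n => p2)
      (fun x2 => ind (s < |∑ i, h (x1 i) (x2 i) - n * m|)))
      = fexp (piW fun _ : Fin n => P) (fun c => ind (s < |∑ i, H (c i) - n * m|)) := by
    rw [hPdef, ← fexp_piW_pair (fun _ : Fin n => p1) (fun _ _ => p2)]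
  rw [hconv, two_mul]
  refine le_trans ?_ (add_le_add key1 key2)
  rw [← fexp_add]
  refine fexp_mono (isPMF_piW fun _ => hP) fun c => ?_
  have : s < |∑ i, H (c i) - n * m| →
      (∑ i, H (c i) ≤ n * m - s ∨ ∑ i, - H (c i) ≤ n * -m - s) := by
    intro hlt
    rw [Finset.sum_neg_distrib]
    rcases lt_abs.1 hlt with h | h
    · right; linarith
    · left; linarith
  exact (ind_mono this).trans (ind_or_le _ _)

/-- The conditional variance of the information density given the inputs. -/
def condVar (W : X1 → X2 → Y → ℝ) (p1 : X1 → ℝ) (p2 : X2 → ℝ) (x1 : X1) (x2 : X2) : ℝ :=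
  fexp (W x1 x2) (fun y => (iDens W p1 p2 x1 x2 y - iBar W p1 p2 x1 x2) ^ 2)

/-- Gaussian approximation of the information density for fixed input blocks whose empirical
conditional variance is within `s` of `n V₂`. -/
theorem noise_bound (hW : IsChannel W) {V R s γ : ℝ} (hV : 0 < V) (hR : 0 < R)
    (hb : ∀ x1 x2 y, |iDens W p1 p2 x1 x2 y - iBar W p1 p2 x1 x2| ≤ R) (hn : 0 < n)
    (hRn : R ≤ Real.sqrt (n * V)) (hs : s / (n * V) ≤ 1 / 2)
    (x1 : Fin n → X1) (x2 : Fin n → X2)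
    (hvar : |∑ i, condVar W p1 p2 (x1 i) (x2 i) - n * V| ≤ s) :
    fexp (blockW W x1 x2) (fun y => ind (∑ i, iDens W p1 p2 (x1 i) (x2 i) (y i) < γ))
      ≤ ((ProbabilityTheory.gaussianReal 0 1)
          {z : ℝ | (∑ i, iBar W p1 p2 (x1 i) (x2 i)) + Real.sqrt (n * V) * z < γ}).toReal
        + 20 * (R / Real.sqrt (n * V)) + 2 * (s / (n * V)) := by
  have hn' : (0 : ℝ) < n := by exact_mod_cast hn
  have hnV : 0 < n * V := mul_pos hn' hV
  set S := Real.sqrt (n * V) with hS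
  have hS0 : 0 < S := Real.sqrt_pos.2 hnV
  have hS2 : S ^ 2 = n * V := Real.sq_sqrt hnV.le
  set U : Fin n → Y → ℝ := fun i y =>
    (iDens W p1 p2 (x1 i) (x2 i) y - iBar W p1 p2 (x1 i) (x2 i)) * S⁻¹ with hU
  set v := (∑ i, condVar W p1 p2 (x1 i) (x2 i)) / (n * V) with hv
  have hv1 : |v - 1| ≤ s / (n * V) := by
    have : v - 1 = (∑ i, condVar W p1 p2 (x1 i) (x2 i) - n * V) / (n * V) := by
      rw [hv]; field_simp
    rw [this, abs_div, abs_of_pos hnV]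
    gcongr
  obtain ⟨hv2, hv3⟩ := abs_le.1 (hv1.trans hs)
  have hBE := berry_esseen_bounded (w := fun i => W (x1 i) (x2 i)) (U := U)
    (fun i => hW.isPMF _ _)
    (fun i => by
      simp only [hU, fexp_mul_const, fexp_sub, fexp_const (hW.isPMF _ _)]
      simp [fexp, iBar])
    (d := R / S) ((div_le_one hS0).2 hRn) (div_nonneg hR.le hS0.le)
    (fun i y => by
      simp only [hU]
      rw [abs_mul, abs_inv, abs_of_pos hS0, ← div_eq_mul_inv]
      gcongr
      exact hb _ _ _)
    (v := v)
    (by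
      simp only [hU, mul_pow, fexp_mul_const]
      rw [← Finset.sum_mul, inv_pow, hS2, hv, div_eq_mul_inv]
      rfl)
    (by linarith) (by linarith) ((γ - ∑ i, iBar W p1 p2 (x1 i) (x2 i)) / S)
  have hset : {z : ℝ | (∑ i, iBar W p1 p2 (x1 i) (x2 i)) + S * z < γ}
      = Set.Iio ((γ - ∑ i, iBar W p1 p2 (x1 i) (x2 i)) / S) := by
    ext z
    simp only [Set.mem_ofPred_eq, Set.mem_Iio]
    rw [lt_div_iff₀ hS0]
    constructor <;> intro h <;> linarith
  rw [hset]
  have hev : ∀ y : Fin n → Y, ind (∑ i, iDens W p1 p2 (x1 i) (x2 i) (y i) < γ)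
      ≤ if indSum U y < (γ - ∑ i, iBar W p1 p2 (x1 i) (x2 i)) / S then 1 else 0 := by
    intro y
    refine ind_mono fun h => ?_
    unfold indSum
    simp only [hU]
    rw [← Finset.sum_mul, Finset.sum_sub_distrib, ← div_eq_mul_inv]
    gcongr
  have h1 := fexp_mono (isPMF_blockW hW x1 x2) hev
  refine h1.trans (hBE.trans ?_)
  linarith

end Block

/-! ### Missed detection and existence of a code -/

theorem fexp_le_one {α : Type*} [Fintype α] {p : α → ℝ} (hp : IsPMF p) {f : α → ℝ}
    (hf : ∀ a, f a ≤ 1) : fexp p f ≤ 1 := by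
  simpa [fexp_const hp] using fexp_mono hp (g := fun _ => 1) hf

theorem Vtwo_eq (W : X1 → X2 → Y → ℝ) (p1 : X1 → ℝ) (p2 : X2 → ℝ) :
    Vtwo W p1 p2 = ∑ x1, ∑ x2, p1 x1 * p2 x2 * condVar W p1 p2 x1 x2 := by
  simp only [Vtwo, condVar, fexp, Finset.mul_sum, mul_assoc]

/-- The probability that the transmitted codewords fail the decoder's test. The index `e a b`
may depend on the whole codebook rows, so the Hoeffding tail events are union-bounded over all
`K` columns, whereas the leading term keeps the selected column. -/
theorem missed_detection {W : X1 → X2 → Y → ℝ} {p1 : X1 → ℝ} {p2 : X2 → ℝ} {n K : ℕ}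
    (hW : IsChannel W) (hp1 : IsPMF p1) (hp2 : IsPMF p2) {R s Θ Θ1 Θ2 : ℝ}
    (hV : 0 < Vtwo W p1 p2) (hR : 0 < R)
    (hb0 : ∀ x1 x2 y, |iDens W p1 p2 x1 x2 y - iBar W p1 p2 x1 x2| ≤ R)
    (hbv : ∀ x1 x2, |condVar W p1 p2 x1 x2 - Vtwo W p1 p2| ≤ R)
    (hb1 : ∀ x1 x2 y, |iDensC1 W p1 x1 x2 y - Icond1 W p1 p2| ≤ R)
    (hb2 : ∀ x1 x2 y, |iDensC2 W p2 x1 x2 y - Icond2 W p1 p2| ≤ R)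
    (hn : 0 < n) (hs0 : 0 ≤ s) (hRn : R ≤ Real.sqrt (n * Vtwo W p1 p2))
    (hs : s / (n * Vtwo W p1 p2) ≤ 1 / 2)
    (h1 : Real.logb 2 Θ1 ≤ n * Icond1 W p1 p2 - s)
    (h2 : Real.logb 2 Θ2 ≤ n * Icond2 W p1 p2 - s)
    (e : (Fin K → Fin n → X1) → (Fin K → Fin n → X2) → Fin K) :
    fexp (piW fun _ : Fin K => piW fun _ : Fin n => p1) (fun a =>
      fexp (piW fun _ : Fin K => piW fun _ : Fin n => p2) (fun b =>
        fexp (blockW W (a (e a b)) (b (e a b)))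
          (fun y => ind (¬ ∃ k, passTest W p1 p2 Θ Θ1 Θ2 (a k) (b k) y))))
    ≤ fexp (piW fun _ : Fin K => piW fun _ : Fin n => p1) (fun a =>
        fexp (piW fun _ : Fin K => piW fun _ : Fin n => p2) (fun b =>
          ((ProbabilityTheory.gaussianReal 0 1)
            {z : ℝ | (∑ i, iBar W p1 p2 (a (e a b) i) (b (e a b) i))
              + Real.sqrt (n * Vtwo W p1 p2) * z < Real.logb 2 Θ}).toReal))
      + (20 * (R / Real.sqrt (n * Vtwo W p1 p2)) + 2 * (s / (n * Vtwo W p1 p2)))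
      + K * (4 * Real.exp (-(s ^ 2 / (2 * n * R ^ 2)))) := by
  set V := Vtwo W p1 p2 with hVdef
  set C := 20 * (R / Real.sqrt (n * V)) + 2 * (s / (n * V)) with hC
  have hn' : (0 : ℝ) < n := by exact_mod_cast hn
  have hC0 : 0 ≤ C := by positivity
  set G : (Fin n → X1) → (Fin n → X2) → ℝ := fun x1 x2 =>
    ((ProbabilityTheory.gaussianReal 0 1)
      {z : ℝ | (∑ i, iBar W p1 p2 (x1 i) (x2 i)) + Real.sqrt (n * V) * z
        < Real.logb 2 Θ}).toReal with hG
  set F1 : (Fin n → X1) → (Fin n → X2) → ℝ := fun x1 x2 =>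
    fexp (blockW W x1 x2) (fun y => ind (∑ i, iDensC1 W p1 (x1 i) (x2 i) (y i)
      < Real.logb 2 Θ1)) with hF1
  set F2 : (Fin n → X1) → (Fin n → X2) → ℝ := fun x1 x2 =>
    fexp (blockW W x1 x2) (fun y => ind (∑ i, iDensC2 W p2 (x1 i) (x2 i) (y i)
      < Real.logb 2 Θ2)) with hF2
  set F3 : (Fin n → X1) → (Fin n → X2) → ℝ := fun x1 x2 =>
    ind (s < |∑ i, condVar W p1 p2 (x1 i) (x2 i) - n * V|) with hF3
  set F : (Fin n → X1) → (Fin n → X2) → ℝ := fun x1 x2 => F1 x1 x2 + F2 x1 x2 + F3 x1 x2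
    with hF
  have hP1 : IsPMF (piW fun _ : Fin n => p1) := isPMF_piW fun _ => hp1
  have hP2 : IsPMF (piW fun _ : Fin n => p2) := isPMF_piW fun _ => hp2
  have hPA : IsPMF (piW fun _ : Fin K => piW fun _ : Fin n => p1) := isPMF_piW fun _ => hP1
  have hPB : IsPMF (piW fun _ : Fin K => piW fun _ : Fin n => p2) := isPMF_piW fun _ => hP2
  have hFnn : ∀ x1 x2, 0 ≤ F x1 x2 := fun x1 x2 =>
    add_nonneg (add_nonneg (fexp_nonneg (isPMF_blockW hW _ _) fun _ => ind_nonneg _)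
      (fexp_nonneg (isPMF_blockW hW _ _) fun _ => ind_nonneg _)) (ind_nonneg _)
  have hpt : ∀ a : Fin K → Fin n → X1, 0 < piW (fun _ : Fin K => piW fun _ : Fin n => p1) a →
      ∀ b : Fin K → Fin n → X2, 0 < piW (fun _ : Fin K => piW fun _ : Fin n => p2) b →
      fexp (blockW W (a (e a b)) (b (e a b)))
          (fun y => ind (¬ ∃ k, passTest W p1 p2 Θ Θ1 Θ2 (a k) (b k) y))
        ≤ G (a (e a b)) (b (e a b)) + C + ∑ k, F (a k) (b k) := by
    intro a ha b hb
    set k := e a b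
    have ha' := pos_of_piW_pos (fun _ => hP1.1) ha k
    have hb' := pos_of_piW_pos (fun _ => hP2.1) hb k
    have hQ := isPMF_blockW hW (a k) (b k)
    have step1 : fexp (blockW W (a k) (b k))
          (fun y => ind (¬ ∃ k, passTest W p1 p2 Θ Θ1 Θ2 (a k) (b k) y))
        ≤ fexp (blockW W (a k) (b k)) (fun y =>
            ind (∑ i, iDens W p1 p2 (a k i) (b k i) (y i) < Real.logb 2 Θ))
          + F1 (a k) (b k) + F2 (a k) (b k) := by
      rw [hF1, hF2, ← fexp_add, ← fexp_add]
      refine fexp_mono_supp hQ fun y hy => ?_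
      refine (ind_mono fun h => not_passTest hW hp1 hp2 (pos_of_piW_pos (fun _ => hp1.1) ha')
        (pos_of_piW_pos (fun _ => hp2.1) hb')
        (pos_of_piW_pos (w := fun i => W (a k i) (b k i)) (fun _ => hW.1 _ _) hy)
        (fun hp => h ⟨k, hp⟩)).trans ?_
      refine (ind_or_le _ _).trans ?_
      gcongr
      exact ind_or_le _ _
    have step2 : fexp (blockW W (a k) (b k)) (fun y =>
            ind (∑ i, iDens W p1 p2 (a k i) (b k i) (y i) < Real.logb 2 Θ))
        ≤ G (a k) (b k) + C + F3 (a k) (b k) := by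
      by_cases hbad : s < |∑ i, condVar W p1 p2 (a k i) (b k i) - n * V|
      · have hG0 : 0 ≤ G (a k) (b k) := ENNReal.toReal_nonneg
        have : F3 (a k) (b k) = 1 := ind_of hbad
        have := fexp_le_one hQ (f := fun y =>
            ind (∑ i, iDens W p1 p2 (a k i) (b k i) (y i) < Real.logb 2 Θ))
            fun y => ind_le_one _
        linarith
      · have := noise_bound hW hV hR hb0 hn hRn hs (a k) (b k) (not_lt.1 hbad)
          (γ := Real.logb 2 Θ)
        have h3 : 0 ≤ F3 (a k) (b k) := ind_nonneg _
        simp only [hG, hC]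
        linarith
    have step3 : F (a k) (b k) ≤ ∑ k, F (a k) (b k) :=
      Finset.single_le_sum (f := fun k => F (a k) (b k)) (fun j _ => hFnn _ _)
        (Finset.mem_univ k)
    have : F (a k) (b k) = F1 (a k) (b k) + F2 (a k) (b k) + F3 (a k) (b k) := rfl
    linarith
  have hcol : fexp (piW fun _ : Fin n => p1) (fun x1 => fexp (piW fun _ : Fin n => p2)
      (fun x2 => F x1 x2)) ≤ 4 * Real.exp (-(s ^ 2 / (2 * n * R ^ 2))) := by
    have t1 := triple_tail hW hp1 hp2 (iDensC1 W p1) (m := Icond1 W p1 p2) rfl hR hb1 hn hs0 h1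
    have t2 := triple_tail hW hp1 hp2 (iDensC2 W p2) (m := Icond2 W p1 p2) rfl hR hb2 hn hs0 h2
    have t3 := pair_tail hp1 hp2 (condVar W p1 p2) (Vtwo_eq W p1 p2) hR hbv hn hs0
    simp only [hF, hF1, hF2, hF3, fexp_add]
    linarith
  calc _ ≤ fexp (piW fun _ : Fin K => piW fun _ : Fin n => p1) (fun a =>
        fexp (piW fun _ : Fin K => piW fun _ : Fin n => p2) (fun b =>
          G (a (e a b)) (b (e a b)) + C + ∑ k, F (a k) (b k))) :=
        fexp_mono_supp hPA fun a ha => fexp_mono_supp hPB fun b hb => hpt a ha b hb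
    _ = fexp (piW fun _ : Fin K => piW fun _ : Fin n => p1) (fun a =>
        fexp (piW fun _ : Fin K => piW fun _ : Fin n => p2) (fun b =>
          G (a (e a b)) (b (e a b)))) + C
        + ∑ _k : Fin K, fexp (piW fun _ : Fin n => p1) (fun x1 => fexp (piW fun _ : Fin n => p2)
      (fun x2 => F x1 x2)) := by
        simp only [fexp_add, fexp_sum, fexp_const hPA, fexp_const hPB,
          fexp_rows_column hP1 hP2 _ F]
    _ ≤ _ := by
        have := Finset.sum_le_sum fun (k : Fin K) (_ : k ∈ Finset.univ) => hcol
        rw [Finset.sum_const (4 * _), Finset.card_univ, Fintype.card_fin, nsmul_eq_mul] at this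
        linarith

/-- One-shot achievability: the error of some code is bounded by the Gaussian term at the best
column plus explicit remainders. -/
theorem exists_code_bound {W : X1 → X2 → Y → ℝ} {p1 : X1 → ℝ} {p2 : X2 → ℝ} {n K M1 M2 : ℕ}
    (hW : IsChannel W) (hp1 : IsPMF p1) (hp2 : IsPMF p2) {R s Θ Θ1 Θ2 : ℝ}
    (hV : 0 < Vtwo W p1 p2) (hR : 0 < R)
    (hb0 : ∀ x1 x2 y, |iDens W p1 p2 x1 x2 y - iBar W p1 p2 x1 x2| ≤ R)
    (hbv : ∀ x1 x2, |condVar W p1 p2 x1 x2 - Vtwo W p1 p2| ≤ R)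
    (hb1 : ∀ x1 x2 y, |iDensC1 W p1 x1 x2 y - Icond1 W p1 p2| ≤ R)
    (hb2 : ∀ x1 x2 y, |iDensC2 W p2 x1 x2 y - Icond2 W p1 p2| ≤ R)
    (hn : 0 < n) (hs0 : 0 ≤ s) (hRn : R ≤ Real.sqrt (n * Vtwo W p1 p2))
    (hs : s / (n * Vtwo W p1 p2) ≤ 1 / 2)
    (hΘ : 0 < Θ) (hΘ1 : 0 < Θ1) (hΘ2 : 0 < Θ2)
    (h1 : Real.logb 2 Θ1 ≤ n * Icond1 W p1 p2 - s)
    (h2 : Real.logb 2 Θ2 ≤ n * Icond2 W p1 p2 - s)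
    (hK : 0 < K) (hM1 : 0 < M1) (hM2 : 0 < M2) :
    ExistsCode W n M1 M2 K
      ((∑ a : Fin K → Fin n → X1, ∑ b : Fin K → Fin n → X2,
            (∏ k, ∏ i, p1 (a k i)) * (∏ k, ∏ i, p2 (b k i)) *
              ((ProbabilityTheory.gaussianReal 0 1)
                {z : ℝ | (⨆ k : Fin K, ∑ i, iBar W p1 p2 (a k i) (b k i)) +
                    Real.sqrt ((n : ℝ) * Vtwo W p1 p2) * z < Real.logb 2 Θ}).toReal)
        + (20 * (R / Real.sqrt (n * Vtwo W p1 p2)) + 2 * (s / (n * Vtwo W p1 p2)))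
        + K * (4 * Real.exp (-(s ^ 2 / (2 * n * R ^ 2))))
        + M1 * (K * (1 / Θ1)) + M2 * (K * (1 / Θ2)) + M1 * M2 * (K * (1 / Θ))) := by
  have : Nonempty (Fin K) := ⟨⟨0, hK⟩⟩
  have hP1 : IsPMF (piW fun _ : Fin n => p1) := isPMF_piW fun _ => hp1
  have hP2 : IsPMF (piW fun _ : Fin n => p2) := isPMF_piW fun _ => hp2
  have hPA : IsPMF (piW fun _ : Fin K => piW fun _ : Fin n => p1) := isPMF_piW fun _ => hP1
  have hPB : IsPMF (piW fun _ : Fin K => piW fun _ : Fin n => p2) := isPMF_piW fun _ => hP2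
  -- the facilitator selects the column with the largest conditional mean information density
  choose e he using fun (a : Fin K → Fin n → X1) (b : Fin K → Fin n → X2) =>
    Finite.exists_max fun k : Fin K => ∑ i, iBar W p1 p2 (a k i) (b k i)
  have hsup : ∀ (a : Fin K → Fin n → X1) (b : Fin K → Fin n → X2), (⨆ k : Fin K, ∑ i, iBar W p1 p2 (a k i) (b k i))
      = ∑ i, iBar W p1 p2 (a (e a b) i) (b (e a b) i) := fun a b =>
    le_antisymm (ciSup_le (he a b))
      (le_ciSup (f := fun k : Fin K => ∑ i, iBar W p1 p2 (a k i) (b k i))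
        (Set.finite_range _).bddAbove (e a b))
  obtain ⟨α, β, g, hg⟩ := random_coding hPA hPB
    (Q := fun a b => blockW W (a (e a b)) (b (e a b))) (fun a b => isPMF_blockW hW _ _)
    (fun a b y => ∃ k, passTest W p1 p2 Θ Θ1 Θ2 (a k) (b k) y) hM1 hM2
    (fun b y => false_alarm_one hW hp1 hΘ1 b y) (fun a y => false_alarm_two hW hp2 hΘ2 a y)
    (fun y => false_alarm_both hW hp1 hp2 hΘ y)
  refine ⟨fun m1 m2 => e (α m1) (β m2), α, β, g, ?_⟩
  have hmiss := missed_detection (K := K) (Θ := Θ) hW hp1 hp2 hV hR hb0 hbv hb1 hb2 hn hs0 hRn hs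
    h1 h2 e
  refine le_trans (le_of_eq ?_) (hg.trans ?_)
  · unfold avgErr
    congr 1
    refine Finset.sum_congr rfl fun m1 _ => Finset.sum_congr rfl fun m2 _ => ?_
    refine Finset.sum_congr rfl fun y _ => ?_
    unfold blockW piW ind
    by_cases h : g y = (m1, m2) <;> simp [h]
  · have hsum : (∑ a : Fin K → Fin n → X1, ∑ b : Fin K → Fin n → X2,
            (∏ k, ∏ i, p1 (a k i)) * (∏ k, ∏ i, p2 (b k i)) *
              ((ProbabilityTheory.gaussianReal 0 1)
                {z : ℝ | (⨆ k : Fin K, ∑ i, iBar W p1 p2 (a k i) (b k i)) +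
                    Real.sqrt ((n : ℝ) * Vtwo W p1 p2) * z < Real.logb 2 Θ}).toReal)
        = fexp (piW fun _ : Fin K => piW fun _ : Fin n => p1) (fun a =>
        fexp (piW fun _ : Fin K => piW fun _ : Fin n => p2) (fun b =>
          ((ProbabilityTheory.gaussianReal 0 1)
            {z : ℝ | (∑ i, iBar W p1 p2 (a (e a b) i) (b (e a b) i))
              + Real.sqrt (n * Vtwo W p1 p2) * z < Real.logb 2 Θ}).toReal)) := by
      simp only [hsup, fexp, piW, Finset.mul_sum, mul_assoc]
    rw [hsum]
    linarith

theorem exists_common_bound (W : X1 → X2 → Y → ℝ) (p1 : X1 → ℝ) (p2 : X2 → ℝ) :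
    ∃ R : ℝ, 1 ≤ R ∧
      (∀ x1 x2 y, |iDens W p1 p2 x1 x2 y - iBar W p1 p2 x1 x2| ≤ R) ∧
      (∀ x1 x2, |condVar W p1 p2 x1 x2 - Vtwo W p1 p2| ≤ R) ∧
      (∀ x1 x2 y, |iDensC1 W p1 x1 x2 y - Icond1 W p1 p2| ≤ R) ∧
      (∀ x1 x2 y, |iDensC2 W p2 x1 x2 y - Icond2 W p1 p2| ≤ R) := by
  obtain ⟨R0, h0, hR0⟩ := exists_abs_bound fun c : X1 × X2 × Y =>
    iDens W p1 p2 c.1 c.2.1 c.2.2 - iBar W p1 p2 c.1 c.2.1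
  obtain ⟨R1, h1, hR1⟩ := exists_abs_bound fun c : X1 × X2 =>
    condVar W p1 p2 c.1 c.2 - Vtwo W p1 p2
  obtain ⟨R2, h2, hR2⟩ := exists_abs_bound fun c : X1 × X2 × Y =>
    iDensC1 W p1 c.1 c.2.1 c.2.2 - Icond1 W p1 p2
  obtain ⟨R3, h3, hR3⟩ := exists_abs_bound fun c : X1 × X2 × Y =>
    iDensC2 W p2 c.1 c.2.1 c.2.2 - Icond2 W p1 p2
  refine ⟨R0 + R1 + R2 + R3, by linarith, fun x1 x2 y => ?_, fun x1 x2 => ?_,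
    fun x1 x2 y => ?_, fun x1 x2 y => ?_⟩
  · linarith [hR0 (x1, x2, y)]
  · linarith [hR1 (x1, x2)]
  · linarith [hR2 (x1, x2, y)]
  · linarith [hR3 (x1, x2, y)]

/-! ### Asymptotic estimates -/

/-- The Hoeffding tail at deviation `s = 2R√(n log₂ K + n log₂ n)` survives a union bound over
`K` columns. -/
theorem union_tail_le {n K : ℕ} (hn : 2 ≤ n) (hK : 0 < K) {R s : ℝ} (hR : 0 < R)
    (hs : s = 2 * R * Real.sqrt (n * Real.logb 2 K + n * Real.logb 2 n)) :
    K * (4 * Real.exp (-(s ^ 2 / (2 * n * R ^ 2)))) ≤ 4 * (1 / n) := by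
  have hn' : (2 : ℝ) ≤ n := by exact_mod_cast hn
  have hn0 : (0 : ℝ) < n := by linarith
  have hK' : (1 : ℝ) ≤ K := by exact_mod_cast hK
  have hK0 : (0 : ℝ) < K := by linarith
  have hl2 : Real.log 2 ≤ 1 := by linarith [Real.log_two_lt_d9]
  have hl2' : 0 < Real.log 2 := Real.log_pos (by norm_num)
  have hlb : ∀ x : ℝ, 1 ≤ x → Real.log x ≤ Real.logb 2 x := fun x hx => by
    unfold Real.logb
    rw [le_div_iff₀ hl2']
    nlinarith [Real.log_nonneg hx]
  have hKl := hlb K hK'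
  have hnl := hlb n (by linarith)
  have hK00 := Real.log_nonneg hK'
  have hn00 := Real.log_nonneg (show (1:ℝ) ≤ n by linarith)
  have hexp : s ^ 2 / (2 * n * R ^ 2) = 2 * (Real.logb 2 K + Real.logb 2 n) := by
    rw [hs, mul_pow, Real.sq_sqrt (by nlinarith)]
    field_simp
  have : Real.exp (-(s ^ 2 / (2 * n * R ^ 2))) ≤ 1 / (K * n) := by
    rw [hexp, one_div, ← Real.exp_log (show (0:ℝ) < K * n by positivity), ← Real.exp_neg,
      Real.exp_le_exp, Real.log_mul hK0.ne' hn0.ne']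
    linarith
  calc (K : ℝ) * (4 * Real.exp (-(s ^ 2 / (2 * n * R ^ 2))))
      ≤ K * (4 * (1 / (K * n))) := by gcongr
    _ = 4 * (1 / n) := by field_simp

theorem one_div_nat_le {n : ℕ} (hn : 2 ≤ n) : 1 / (n : ℝ) ≤ 1 / Real.sqrt n := by
  have hn' : (2 : ℝ) ≤ n := by exact_mod_cast hn
  have : 0 < Real.sqrt n := Real.sqrt_pos.2 (by linarith)
  apply one_div_le_one_div_of_le this
  rw [Real.sqrt_le_left (by linarith)]
  nlinarith

theorem one_div_sqrt_le {n : ℕ} (hn : 2 ≤ n) :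
    1 / Real.sqrt n ≤ Real.sqrt (Real.logb 2 n / n) := by
  have hn' : (2 : ℝ) ≤ n := by exact_mod_cast hn
  rw [Real.sqrt_div' _ (by linarith)]
  gcongr
  rw [Real.one_le_sqrt, Real.le_logb_iff_rpow_le (by norm_num) (by linarith)]
  simpa using hn'

theorem logb_nat_le (n : ℕ) : Real.logb 2 n ≤ n := by
  rcases Nat.eq_zero_or_pos n with rfl | h
  · simp
  rw [Real.logb_le_iff_le_rpow (by norm_num) (by exact_mod_cast h), Real.rpow_natCast]
  exact_mod_cast Nat.lt_two_pow_self.le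

/-- The relative deviation `s / (n V)` in terms of the error scale of the theorem. -/
theorem deviation_le {n lK ln R V : ℝ} (hn : 0 < n) (hlK : 0 ≤ lK) (hln : 0 ≤ ln) (hR : 0 < R)
    (hV : 0 < V) :
    2 * R * Real.sqrt (n * lK + n * ln) / (n * V)
      ≤ 2 * R / V * (Real.sqrt (ln / n) + Real.sqrt (lK / n)) := by
  have h : Real.sqrt (n * lK + n * ln) ≤ n * (Real.sqrt (ln / n) + Real.sqrt (lK / n)) := by
    apply Real.sqrt_le_iff.2 ⟨by positivity, ?_⟩
    have e1 : Real.sqrt (ln / n) ^ 2 = ln / n := Real.sq_sqrt (by positivity)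
    have e2 : Real.sqrt (lK / n) ^ 2 = lK / n := Real.sq_sqrt (by positivity)
    have e3 : n ^ 2 * (ln / n) = n * ln := by field_simp
    have e4 : n ^ 2 * (lK / n) = n * lK := by field_simp
    have : 0 ≤ 2 * n ^ 2 * (Real.sqrt (ln / n) * Real.sqrt (lK / n)) := by positivity
    linear_combination this - n ^ 2 * e1 - n ^ 2 * e2 - e3 - e4
  calc _ ≤ 2 * R * (n * (Real.sqrt (ln / n) + Real.sqrt (lK / n))) / (n * V) := by gcongr
    _ = _ := by field_simp

/-- The rate backoff absorbs the threshold overhead `log₂ K + ½ log₂ n` and the deviation. -/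
theorem threshold_le {n lK ln R I x : ℝ} (hlK : 0 ≤ lK) (hln : 0 ≤ ln) (hKn : lK ≤ n)
    (hnn : ln ≤ n) (hx : x ≤ n * I - (2 + 2 * R) * Real.sqrt (n * lK + n * ln)) :
    x + lK + 1 / 2 * ln ≤ n * I - 2 * R * Real.sqrt (n * lK + n * ln) := by
  have h1 : lK ≤ Real.sqrt (n * lK + n * ln) := Real.le_sqrt_of_sq_le (by nlinarith)
  have h2 : ln ≤ Real.sqrt (n * lK + n * ln) := Real.le_sqrt_of_sq_le (by nlinarith)
  linarith

/-- The Berry–Esseen remainder in terms of the error scale of the theorem. -/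
theorem berry_esseen_remainder_le {n R V t : ℝ} (hn : 0 < n) (hR : 0 < R) (hV : 0 < V)
    (ht : 1 / Real.sqrt n ≤ t) :
    20 * (R / Real.sqrt (n * V)) ≤ 20 * R / Real.sqrt V * t := by
  have hSV : 0 < Real.sqrt V := Real.sqrt_pos.2 hV
  have hsn : 0 < Real.sqrt n := Real.sqrt_pos.2 hn
  have : 20 * (R / Real.sqrt (n * V)) = 20 * R / Real.sqrt V * (1 / Real.sqrt n) := by
    rw [Real.sqrt_mul hn.le]
    field_simp
  rw [this]
  gcongr

/-- **Theorem 1, achievability with a cooperation facilitator.**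
Fix a discrete memoryless MAC with finite alphabets and a product input pmf `p₁·p₂` with
`V₂ > 0`.  For each `k ∈ [K]` let `X₁ⁿ(k), X₂ⁿ(k)` be i.i.d. `n`-vectors from `p₁, p₂`
(all `2K` vectors mutually independent) and let `Z₀` be an independent standard Gaussian.
There exist constants `c, c', δ > 0` and `n₀` such that for all `n ≥ n₀`, all `K` with
`log₂ K ≤ δ·n`, all `M₁, M₂ ≥ 1` and all `ε ∈ (0,1)`: if
`ε ≥ Pr(max_k Σᵢ i(X₁ᵢ(k),X₂ᵢ(k)) + √(nV₂)·Z₀ < log₂(M₁M₂K) + ½log₂ n)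
      + c'(√(log₂ n/n) + √(log₂ K/n))`,
`log₂ M₁ ≤ n·I(X₁;Y|X₂) − c√(n log₂ K + n log₂ n)` and
`log₂ M₂ ≤ n·I(X₂;Y|X₁) − c√(n log₂ K + n log₂ n)`, then an `(n,M₁,M₂,K,ε)` facilitated
code exists.  (The probability over the codewords is the explicit finite sum below, and the
probability over `Z₀` is the standard Gaussian measure of the corresponding event.) -/
theorem facilitated_MAC_achievability_initial_bound
    (W : X1 → X2 → Y → ℝ) (p1 : X1 → ℝ) (p2 : X2 → ℝ)
    (hW : IsChannel W) (hp1 : IsPMF p1) (hp2 : IsPMF p2)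
    (hV2 : 0 < Vtwo W p1 p2) :
    ∃ (c c' δ : ℝ) (n0 : ℕ), 0 < c ∧ 0 < c' ∧ 0 < δ ∧
      ∀ n : ℕ, n0 ≤ n → ∀ K M1 M2 : ℕ, 0 < K → 0 < M1 → 0 < M2 →
        Real.logb 2 (K : ℝ) ≤ δ * n →
        ∀ ε : ℝ, 0 < ε → ε < 1 →
        ((∑ a : Fin K → Fin n → X1, ∑ b : Fin K → Fin n → X2,
            (∏ k, ∏ i, p1 (a k i)) * (∏ k, ∏ i, p2 (b k i)) *
              ((ProbabilityTheory.gaussianReal 0 1)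
                {z : ℝ | (⨆ k : Fin K, ∑ i, iBar W p1 p2 (a k i) (b k i)) +
                    Real.sqrt ((n : ℝ) * Vtwo W p1 p2) * z <
                  Real.logb 2 ((M1 : ℝ) * M2 * K) + (1 / 2) * Real.logb 2 (n : ℝ)}).toReal)
          + c' * (Real.sqrt (Real.logb 2 (n : ℝ) / n) +
              Real.sqrt (Real.logb 2 (K : ℝ) / n)) ≤ ε) →
        Real.logb 2 (M1 : ℝ) ≤
          (n : ℝ) * Icond1 W p1 p2 -
            c * Real.sqrt ((n : ℝ) * Real.logb 2 (K : ℝ) + (n : ℝ) * Real.logb 2 (n : ℝ)) →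
        Real.logb 2 (M2 : ℝ) ≤
          (n : ℝ) * Icond2 W p1 p2 -
            c * Real.sqrt ((n : ℝ) * Real.logb 2 (K : ℝ) + (n : ℝ) * Real.logb 2 (n : ℝ)) →
        ExistsCode W n M1 M2 K ε := by
  obtain ⟨R, hR1, hb0, hbv, hb1, hb2⟩ := exists_common_bound W p1 p2
  set V := Vtwo W p1 p2 with hVdef
  have hR : 0 < R := by linarith
  have hSV : 0 < Real.sqrt V := Real.sqrt_pos.2 hV2
  refine ⟨2 + 2 * R, 20 * R / Real.sqrt V + 4 * R / V + 7, 1, max 2 ⌈R ^ 2 / V⌉₊,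
    by positivity, by positivity, one_pos, ?_⟩
  intro n hn0 K M1 M2 hK hM1 hM2 hKn ε _ hε1 hε hr1 hr2
  set c' := 20 * R / Real.sqrt V + 4 * R / V + 7 with hc'
  have hn2 : 2 ≤ n := (le_max_left _ _).trans hn0
  have hnR : R ^ 2 / V ≤ n := Nat.ceil_le.1 ((le_max_right _ _).trans hn0)
  have hn' : (2 : ℝ) ≤ n := by exact_mod_cast hn2
  have hn00 : (0 : ℝ) < n := by linarith
  have hK' : (1 : ℝ) ≤ K := by exact_mod_cast hK
  have hK0 : (0 : ℝ) < K := by linarith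
  have hM1' : (0 : ℝ) < M1 := by exact_mod_cast hM1
  have hM2' : (0 : ℝ) < M2 := by exact_mod_cast hM2
  have hlK : 0 ≤ Real.logb 2 (K : ℝ) := Real.logb_nonneg (by norm_num) hK'
  have hln : 0 ≤ Real.logb 2 (n : ℝ) := Real.logb_nonneg (by norm_num) (by linarith)
  have hlnn := logb_nat_le n
  rw [one_mul] at hKn
  set lK := Real.logb 2 (K : ℝ) with hlKdef
  set ln := Real.logb 2 (n : ℝ) with hlndef
  set Λ := (n : ℝ) * lK + n * ln with hΛ
  set s := 2 * R * Real.sqrt Λ with hs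
  have hΛ0 : 0 ≤ Λ := by positivity
  have hs0 : 0 ≤ s := by positivity
  have hsqn : 0 < Real.sqrt (n : ℝ) := Real.sqrt_pos.2 hn00
  have hRn : R ≤ Real.sqrt (n * V) := by
    apply Real.le_sqrt_of_sq_le
    rwa [div_le_iff₀ hV2] at hnR
  set u := Real.sqrt (ln / n) with hu
  set w := Real.sqrt (lK / n) with hw
  have hu0 : 0 ≤ u := Real.sqrt_nonneg _
  have hw0 : 0 ≤ w := Real.sqrt_nonneg _
  have hsu : s / (n * V) ≤ 2 * R / V * (u + w) := deviation_le hn00 hlK hln hR hV2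
  have hgauss : 0 ≤ ∑ a : Fin K → Fin n → X1, ∑ b : Fin K → Fin n → X2,
            (∏ k, ∏ i, p1 (a k i)) * (∏ k, ∏ i, p2 (b k i)) *
              ((ProbabilityTheory.gaussianReal 0 1)
                {z : ℝ | (⨆ k : Fin K, ∑ i, iBar W p1 p2 (a k i) (b k i)) +
                    Real.sqrt ((n : ℝ) * V) * z <
                  Real.logb 2 ((M1 : ℝ) * M2 * K) + (1 / 2) * ln}).toReal :=
    Finset.sum_nonneg fun a _ => Finset.sum_nonneg fun b _ =>
      mul_nonneg (mul_nonneg (Finset.prod_nonneg fun k _ => Finset.prod_nonneg fun i _ => hp1.1 _)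
        (Finset.prod_nonneg fun k _ => Finset.prod_nonneg fun i _ => hp2.1 _))
        ENNReal.toReal_nonneg
  have hA : 0 ≤ 20 * R / Real.sqrt V := by positivity
  -- a nontrivial `ε` forces the deviation `s` to be at most half of `n V₂`
  have hs2 : s / (n * V) ≤ 1 / 2 := by
    have h1 : c' * (u + w) < 1 := by linarith
    have h2 : 4 * R / V * (u + w) ≤ c' * (u + w) := by
      gcongr
      rw [hc']; linarith
    have h3 : 4 * R / V * (u + w) = 2 * (2 * R / V * (u + w)) := by ring
    linarith
  have hlogsq : Real.logb 2 (Real.sqrt n) = 1 / 2 * ln := by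
    rw [Real.sqrt_eq_rpow, Real.logb_rpow_eq_mul_logb_of_pos hn00]
  have hcode := exists_code_bound (K := K) (M1 := M1) (M2 := M2) (Θ := M1 * M2 * K * Real.sqrt n)
    (Θ1 := M1 * K * Real.sqrt n) (Θ2 := M2 * K * Real.sqrt n) hW hp1 hp2 hV2 hR hb0 hbv hb1 hb2
    (by omega) hs0 hRn hs2 (by positivity) (by positivity) (by positivity)
    (by
      rw [Real.logb_mul (by positivity) hsqn.ne', Real.logb_mul hM1'.ne' hK0.ne', hlogsq]
      exact threshold_le hlK hln hKn hlnn hr1)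
    (by
      rw [Real.logb_mul (by positivity) hsqn.ne', Real.logb_mul hM2'.ne' hK0.ne', hlogsq]
      exact threshold_le hlK hln hKn hlnn hr2) hK hM1 hM2
  obtain ⟨e, f1, f2, g, herr⟩ := hcode
  refine ⟨e, f1, f2, g, herr.trans (le_trans ?_ hε)⟩
  rw [Real.logb_mul (by positivity) hsqn.ne', hlogsq]
  have t1 := union_tail_le hn2 hK hR hs
  have t2 := one_div_nat_le hn2
  have t3 : 1 / Real.sqrt n ≤ u := one_div_sqrt_le hn2
  have t4 : (M1 : ℝ) * (K * (1 / (M1 * K * Real.sqrt n))) = 1 / Real.sqrt n := by field_simp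
  have t5 : (M2 : ℝ) * (K * (1 / (M2 * K * Real.sqrt n))) = 1 / Real.sqrt n := by field_simp
  have t6 : (M1 : ℝ) * M2 * (K * (1 / (M1 * M2 * K * Real.sqrt n))) = 1 / Real.sqrt n := by
    field_simp
  have t7 : 20 * (R / Real.sqrt (n * V)) ≤ 20 * R / Real.sqrt V * (u + w) :=
    berry_esseen_remainder_le hn00 hR hV2 (by linarith)
  have t8 : c' * (u + w) = 20 * R / Real.sqrt V * (u + w) + 2 * (2 * R / V * (u + w))
      + 7 * (u + w) := by rw [hc']; ring
  rw [t4, t5, t6, t8]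
  linarith

end
end

section
/- Fix V₁,V₂ ≥ 0 and ε∈(0,1). For every positive integer K with K > e³·√(2π)·ln(4/ε), it holds that F_{S_K}^{-1}(ε) ≥ √(V₁·(2 ln K − 2 ln ln(4/ε) − ln ln K − ln(4π))) − √(2 V₂ ln(2/ε)). -/
/-!
Put `a = √(2 ln(2/ε))` and `m = √(2 ln K − 2 ln ln(4/ε) − ln ln K − ln 4π)`, so that the claimed
bound is `√V₁·m − √V₂·a`. For every `s` below this value, the event `S_K ≤ s` forces `Z₀ < -a` or
`max_k Z_k < m`. The first event has probability at most `exp(-a²/2) = ε/2` by the Chernoff bound.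
The second has probability `(1 − Q(m))^K ≤ exp(-K·Q(m))`, where `Q` is the Gaussian tail, so it is
enough that `K·Q(m) ≥ ln(4/ε)`. This follows from the Mills ratio bound `Q(x) ≥ x/(1+x²)·φ(x)`:

* for `m > 1`, the choice of `m` makes `K·φ(m) = ln(4/ε)·√(2 ln K)`, and `√(2 ln K) ≥ m + 1/m`;
* for `m ≤ 1` (which includes the case of a negative radicand, where `m = 0`),
  `Q(m) ≥ Q(1) ≥ φ(1)/2` and the lower bound assumed on `K` suffices.

Hence `F_{S_K}(s) ≤ ε` for all these `s`. The set `{s : F_{S_K}(s) ≤ ε}` is bounded above because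
`F_{S_K}` tends to `1 > ε`, so its `sSup` is a genuine supremum.
-/

open MeasureTheory

/-- The CDF of `S_K = √V₂·Z₀ + √V₁·max_{k∈[K]} Z_k`, where `Z₀,…,Z_K` are i.i.d. standard
Gaussian random variables (realized as the coordinates of the product Gaussian measure on
`Fin (K+1) → ℝ`, with `Z₀` the coordinate `0` and `Z₁,…,Z_K` the remaining `K` coordinates). -/
noncomputable def FSK (V1 V2 : ℝ) (K : ℕ) (s : ℝ) : ℝ :=
  ((Measure.pi fun _ : Fin (K + 1) => ProbabilityTheory.gaussianReal 0 1)
    {ω | Real.sqrt V2 * ω 0 + Real.sqrt V1 * (⨆ k : Fin K, ω k.succ) ≤ s}).toReal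

/-- The inverse CDF of `S_K`: `F_{S_K}^{-1}(p) = sup {s : F_{S_K}(s) ≤ p}`. -/
noncomputable def FSKinv (V1 V2 : ℝ) (K : ℕ) (p : ℝ) : ℝ :=
  sSup {s | FSK V1 V2 K s ≤ p}

open ProbabilityTheory Real Filter Topology

/-- The function `x/(1+x²)·φ(x)`, with `φ` the standard Gaussian density, has derivative
`-(1 − 2/(1+x²)²)·φ(x)`. -/
lemma hasDerivAt_mills (x : ℝ) :
    HasDerivAt (fun x : ℝ => x / (1 + x ^ 2) * gaussianPDFReal 0 1 x)
      (-((1 - 2 / (1 + x ^ 2) ^ 2) * gaussianPDFReal 0 1 x)) x := by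
  have hx : (1 + x ^ 2) ≠ 0 := by positivity
  have h1 : HasDerivAt (fun x : ℝ => x / (1 + x ^ 2))
      ((1 * (1 + x ^ 2) - x * (2 * x)) / (1 + x ^ 2) ^ 2) x := by
    refine (hasDerivAt_id x).div ?_ hx
    simpa using (hasDerivAt_pow 2 x).const_add 1
  have h2 : HasDerivAt (gaussianPDFReal 0 1) (gaussianPDFReal 0 1 x * (-x)) x := by
    have h3 : HasDerivAt (fun x : ℝ => -(x - 0) ^ 2 / (2 * ((1 : NNReal) : ℝ))) (-x) x := by
      have h4 := ((hasDerivAt_pow 2 x).fun_neg).div_const 2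
      have h5 : -(((2 : ℕ) : ℝ) * x ^ (2 - 1)) / 2 = -x := by norm_num; ring
      rw [h5] at h4
      simpa using h4
    have h6 := (h3.exp).const_mul (√(2 * π * ((1 : NNReal) : ℝ)))⁻¹
    rw [← mul_assoc] at h6
    exact h6
  refine (h1.fun_mul h2).congr_deriv ?_
  field_simp
  ring

/-- Mills ratio lower bound for the standard Gaussian tail. -/
lemma mills_le (m : ℝ) :
    m / (1 + m ^ 2) * gaussianPDFReal 0 1 m ≤ (gaussianReal 0 1).real (Set.Ici m) := by
  have hcoef : ∀ x : ℝ, |1 - 2 / (1 + x ^ 2) ^ 2| ≤ 1 := by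
    intro x
    have h : 2 / (1 + x ^ 2) ^ 2 ≤ 2 := by
      rw [div_le_iff₀ (by positivity)]; nlinarith [sq_nonneg x, sq_nonneg (x ^ 2)]
    have h' : 0 ≤ 2 / (1 + x ^ 2) ^ 2 := by positivity
    rw [abs_le]; constructor <;> linarith
  have hint : Integrable (fun x : ℝ => -((1 - 2 / (1 + x ^ 2) ^ 2) * gaussianPDFReal 0 1 x)) := by
    refine (integrable_gaussianPDFReal 0 1).mono' ?_ (ae_of_all _ fun x => ?_)
    · exact ((by fun_prop : Measurable fun x : ℝ => (1 - 2 / (1 + x ^ 2) ^ 2)).mul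
        (measurable_gaussianPDFReal 0 1)).neg.aestronglyMeasurable
    · rw [norm_neg, norm_mul, Real.norm_eq_abs, Real.norm_eq_abs,
        abs_of_nonneg (gaussianPDFReal_nonneg 0 1 x)]
      exact mul_le_of_le_one_left (gaussianPDFReal_nonneg 0 1 x) (hcoef x)
  have hpdf : ∀ x, gaussianPDFReal 0 1 x ≤ 1 := by
    intro x
    rw [gaussianPDFReal_def]
    refine mul_le_one₀ ?_ (exp_pos _).le ?_
    · apply inv_le_one_of_one_le₀
      rw [Real.one_le_sqrt]
      have := Real.pi_gt_three
      simp; linarith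
    · rw [exp_le_one_iff]
      have := sq_nonneg x
      simp; linarith
  have htend : Tendsto (fun x : ℝ => x / (1 + x ^ 2) * gaussianPDFReal 0 1 x) atTop (𝓝 0) := by
    refine squeeze_zero' ?_ ?_ tendsto_inv_atTop_zero
    · filter_upwards [eventually_gt_atTop 0] with x hx
      have := gaussianPDFReal_nonneg 0 1 x
      positivity
    · filter_upwards [eventually_gt_atTop 0] with x hx
      refine (mul_le_of_le_one_right (by positivity) (hpdf x)).trans ?_
      rw [div_le_iff₀ (by positivity)]
      field_simp
      nlinarith
  have hftc := integral_Ioi_of_hasDerivAt_of_tendsto'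
    (fun x (_ : x ∈ Set.Ici m) => hasDerivAt_mills x) hint.integrableOn htend
  rw [measureReal_def, gaussianReal_apply_eq_integral 0 one_ne_zero,
    ENNReal.toReal_ofReal (integral_nonneg fun x => gaussianPDFReal_nonneg 0 1 x),
    integral_Ici_eq_integral_Ioi]
  have hle : ∫ x in Set.Ioi m, ((1 - 2 / (1 + x ^ 2) ^ 2) * gaussianPDFReal 0 1 x) ≤
      ∫ x in Set.Ioi m, gaussianPDFReal 0 1 x := by
    refine integral_mono ?_ (integrable_gaussianPDFReal 0 1).integrableOn fun x => ?_
    · simpa using hint.neg.restrict (s := Set.Ioi m)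
    · exact mul_le_of_le_one_left (gaussianPDFReal_nonneg 0 1 x) (le_of_abs_le (hcoef x))
  rw [integral_neg] at hftc
  linarith

lemma gaussianPDFReal_std (x : ℝ) :
    gaussianPDFReal 0 1 x = (√(2 * π))⁻¹ * exp (-x ^ 2 / 2) := by
  simp [gaussianPDFReal_def]

/-- The expected number of `k` Gaussians exceeding the threshold is at least `L`, which stands
for `ln(4/ε)`. -/
lemma le_mul_tail {L k : ℝ} (hL : 1 ≤ L) (hk : exp 3 * √(2 * π) * L < k) :
    L ≤ k * (gaussianReal 0 1).real
      (Set.Ici (√(2 * log k - 2 * log L - log (log k) - log (4 * π)))) := by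
  have hpi := Real.pi_gt_three
  have hs1 : 1 ≤ √(2 * π) := by rw [Real.one_le_sqrt]; linarith
  have hs0 : 0 < √(2 * π) := by linarith
  have hL0 : 0 < L := by linarith
  have hk3 : exp 3 < k := by
    refine lt_of_le_of_lt ?_ hk
    have : 1 ≤ √(2 * π) * L := by nlinarith
    nlinarith [exp_pos 3]
  have hk0 : 0 < k := (exp_pos 3).trans hk3
  have hlogk : 3 < log k := by rwa [Real.lt_log_iff_exp_lt hk0]
  set X := 2 * log k - 2 * log L - log (log k) - log (4 * π) with hX
  rcases le_or_gt (√X) 1 with hm | hm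
  · have h1 := mills_le 1
    have h2 : (gaussianReal 0 1).real (Set.Ici 1) ≤ (gaussianReal 0 1).real (Set.Ici √X) :=
      measureReal_mono (Set.Ici_subset_Ici.2 hm)
    refine le_trans ?_ (mul_le_mul_of_nonneg_left (h1.trans h2) hk0.le)
    rw [gaussianPDFReal_std]
    have h3 : exp 3 * √(2 * π) * L * (1 / (1 + 1 ^ 2) * ((√(2 * π))⁻¹ * exp (-1 ^ 2 / 2)))
        = L * (exp (5 / 2) / 2) := by
      rw [show (5 / 2 : ℝ) = 3 + (-1 ^ 2 / 2) by norm_num, exp_add]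
      field_simp
      norm_num
    have h4 : (1 : ℝ) ≤ exp (5 / 2) / 2 := by
      have := add_one_le_exp (5 / 2 : ℝ); linarith
    calc L ≤ L * (exp (5 / 2) / 2) := le_mul_of_one_le_right hL0.le h4
      _ = _ := h3.symm
      _ ≤ _ := mul_le_mul_of_nonneg_right hk.le (by positivity)
  · have hX1 : 1 < X := by
      have := (Real.lt_sqrt zero_le_one).1 hm
      simpa using this
    have hsq : √X ^ 2 = X := Real.sq_sqrt (by linarith)
    refine le_trans ?_ (mul_le_mul_of_nonneg_left (mills_le (√X)) hk0.le)
    rw [gaussianPDFReal_std, hsq]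
    have hexp : exp (-X / 2) = √(4 * π) * √(log k) * L / k := by
      rw [← Real.exp_log (show 0 < √(4 * π) * √(log k) * L / k by positivity)]
      congr 1
      rw [Real.log_div (by positivity) (by positivity), Real.log_mul (by positivity) (by positivity),
        Real.log_mul (by positivity) (by positivity), Real.log_sqrt (by positivity),
        Real.log_sqrt (by positivity), hX]
      ring
    -- `e³ < 12π ≤ 4π·ln k`, so the correction terms subtracted from `2 ln k` in `X` exceed `3`.
    have hgap : X + 3 ≤ 2 * log k := by
      have h1 : 0 ≤ log L := Real.log_nonneg hL
      have h2 : 3 ≤ log (log k) + log (4 * π) := by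
        rw [← Real.log_mul (by positivity) (by positivity), Real.le_log_iff_exp_le (by positivity)]
        have he : exp 3 ≤ 36 := by
          have h := Real.exp_one_lt_d9
          have : exp 3 = exp 1 ^ 3 := by rw [← Real.exp_nat_mul]; norm_num
          rw [this]
          calc exp 1 ^ 3 ≤ 3 ^ 3 := by gcongr; linarith
            _ ≤ 36 := by norm_num
        nlinarith
      linarith
    have hroot : 1 + X ≤ √X * √(2 * log k) := by
      rw [← Real.sqrt_mul (by linarith)]
      apply Real.le_sqrt_of_sq_le
      nlinarith
    have hsplit : √(4 * π) * √(log k) = √(2 * π) * √(2 * log k) := by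
      rw [← Real.sqrt_mul (by positivity), ← Real.sqrt_mul (by positivity)]
      congr 1; ring
    rw [hexp, hsplit]
    have hfin : k * (√X / (1 + X) * ((√(2 * π))⁻¹ * (√(2 * π) * √(2 * log k) * L / k)))
        = L * ((√X * √(2 * log k)) / (1 + X)) := by
      field_simp
    rw [hfin]
    exact le_mul_of_one_le_right hL0.le ((one_le_div (by linarith)).2 hroot)

lemma gaussian_lower_tail_le {a : ℝ} (ha : 0 ≤ a) :
    (gaussianReal 0 1).real (Set.Iio (-a)) ≤ exp (-a ^ 2 / 2) := by
  have h := measure_le_le_exp_mul_mgf (X := id) (μ := gaussianReal 0 1) (t := -a) (-a)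
    (by linarith) (integrable_exp_mul_gaussianReal _)
  rw [mgf_id_gaussianReal, ← exp_add] at h
  refine (measureReal_mono (fun x (hx : x < -a) => hx.le)).trans (h.trans_eq ?_)
  congr 1
  simp
  ring

lemma bddAbove_FSK (V1 V2 : ℝ) (K : ℕ) {ε : ℝ} (hε : ε < 1) :
    BddAbove {s | FSK V1 V2 K s ≤ ε} := by
  set P := Measure.pi fun _ : Fin (K + 1) => gaussianReal 0 1
  set f : (Fin (K + 1) → ℝ) → ℝ := fun ω => √V2 * ω 0 + √V1 * (⨆ k : Fin K, ω k.succ)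
  have htend := tendsto_measure_iUnion_atTop (μ := P) (s := fun n : ℕ => {ω | f ω ≤ n})
    (fun i j hij ω (hω : f ω ≤ i) => hω.trans (by exact_mod_cast hij))
  have huniv : (⋃ n : ℕ, {ω | f ω ≤ n}) = Set.univ := by
    ext ω; simpa using exists_nat_ge (f ω)
  rw [huniv, measure_univ] at htend
  have htend' := (ENNReal.tendsto_toReal ENNReal.one_ne_top).comp htend
  obtain ⟨n, hn⟩ := (htend'.eventually (lt_mem_nhds (by simpa using hε))).exists
  refine ⟨n, fun s hs => ?_⟩
  by_contra! hlt
  have hmono : P.real {ω | f ω ≤ n} ≤ P.real {ω | f ω ≤ s} :=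
    measureReal_mono fun ω (hω : f ω ≤ n) => hω.trans hlt.le
  have hs' : P.real {ω | f ω ≤ s} ≤ ε := hs
  have hn' : ε < P.real {ω | f ω ≤ n} := hn
  linarith

lemma pi_max_lt_le (K : ℕ) (m : ℝ) :
    (Measure.pi fun _ : Fin (K + 1) => gaussianReal 0 1).real {ω | ∀ k : Fin K, ω k.succ < m} ≤
      exp (-(K * (gaussianReal 0 1).real (Set.Ici m))) := by
  have hset : {ω : Fin (K + 1) → ℝ | ∀ k : Fin K, ω k.succ < m} =
      Set.univ.pi (Fin.cons Set.univ fun _ => Set.Iio m : Fin (K + 1) → Set ℝ) := by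
    ext ω
    simp [Fin.forall_fin_succ]
  rw [hset, measureReal_def, Measure.pi_pi, Fin.prod_univ_succ]
  simp only [Fin.cons_zero, Fin.cons_succ, measure_univ, one_mul, Finset.prod_const,
    Finset.card_univ, Fintype.card_fin, ENNReal.toReal_pow]
  have hcompl : (gaussianReal 0 1 (Set.Iio m)).toReal = 1 - (gaussianReal 0 1).real (Set.Ici m) := by
    rw [← measureReal_def, ← Set.compl_Ici, probReal_compl_eq_one_sub measurableSet_Ici]
  calc (gaussianReal 0 1 (Set.Iio m)).toReal ^ K
      ≤ exp (-(gaussianReal 0 1).real (Set.Ici m)) ^ K := by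
        refine pow_le_pow_left₀ ENNReal.toReal_nonneg ?_ K
        rw [hcompl]; exact Real.one_sub_le_exp_neg _
    _ = _ := by rw [← Real.exp_nat_mul]; congr 1; ring

/-- Fix `V₁, V₂ ≥ 0` and `ε ∈ (0,1)`. For every positive integer `K` with
`K > e³·√(2π)·ln(4/ε)`, we have
`F_{S_K}^{-1}(ε) ≥ √(V₁·(2 ln K − 2 ln ln(4/ε) − ln ln K − ln(4π))) − √(2 V₂ ln(2/ε))`. -/
theorem FSKinv_lower_bound (V1 V2 : ℝ) (hV1 : 0 ≤ V1) (hV2 : 0 ≤ V2)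
    (ε : ℝ) (hε : ε ∈ Set.Ioo (0 : ℝ) 1) (K : ℕ) (hKpos : 0 < K)
    (hK : Real.exp 3 * Real.sqrt (2 * Real.pi) * Real.log (4 / ε) < (K : ℝ)) :
    Real.sqrt (V1 * (2 * Real.log K - 2 * Real.log (Real.log (4 / ε)) -
        Real.log (Real.log K) - Real.log (4 * Real.pi))) -
      Real.sqrt (2 * V2 * Real.log (2 / ε)) ≤ FSKinv V1 V2 K ε := by
  obtain ⟨hε0, hε1⟩ := hε
  set X := 2 * log K - 2 * log (log (4 / ε)) - log (log K) - log (4 * π)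
  have hL : 1 ≤ log (4 / ε) := by
    rw [Real.le_log_iff_exp_le (by positivity), le_div_iff₀ hε0]
    nlinarith [Real.exp_one_lt_d9, Real.exp_one_gt_d9]
  have hlog2 : 0 ≤ log (2 / ε) := by
    apply Real.log_nonneg
    rw [le_div_iff₀ hε0]; linarith
  set a := √(2 * log (2 / ε)) with ha
  have hsplit : √(2 * V2 * log (2 / ε)) = √V2 * a := by
    rw [ha, ← Real.sqrt_mul hV2]; congr 1; ring
  rw [Real.sqrt_mul hV1, hsplit]
  refine le_of_forall_lt fun s hs => ?_
  -- A point strictly between `s` and the bound belongs to the set whose supremum is taken.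
  obtain ⟨t, hst, ht⟩ := exists_between hs
  refine hst.trans_le (le_csSup (bddAbove_FSK V1 V2 K hε1) ?_)
  set P := Measure.pi fun _ : Fin (K + 1) => gaussianReal 0 1
  have hsub : {ω : Fin (K + 1) → ℝ | √V2 * ω 0 + √V1 * (⨆ k : Fin K, ω k.succ) ≤ t} ⊆
      {ω | ω 0 < -a} ∪ {ω | ∀ k : Fin K, ω k.succ < √X} := by
    intro ω hω
    by_contra hcon
    simp only [Set.mem_union, Set.mem_ofPred_eq, not_or, not_lt, not_forall] at hcon hω
    obtain ⟨h0, k, hk⟩ := hcon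
    have hmax : √X ≤ ⨆ k : Fin K, ω k.succ :=
      hk.trans (le_ciSup (f := fun k : Fin K => ω k.succ) (Set.finite_range _).bddAbove k)
    have h1 := mul_le_mul_of_nonneg_left hmax (Real.sqrt_nonneg V1)
    have h2 := mul_le_mul_of_nonneg_left h0 (Real.sqrt_nonneg V2)
    linarith
  have hZ0 : P.real {ω | ω 0 < -a} ≤ ε / 2 := by
    have hmp := measurePreserving_eval (fun _ : Fin (K + 1) => gaussianReal 0 1) 0
    have heq : P.real {ω | ω 0 < -a} = (gaussianReal 0 1).real (Set.Iio (-a)) := by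
      rw [measureReal_def, measureReal_def,
        ← hmp.measure_preimage measurableSet_Iio.nullMeasurableSet]
      rfl
    rw [heq]
    refine (gaussian_lower_tail_le (Real.sqrt_nonneg _)).trans_eq ?_
    rw [Real.sq_sqrt (by linarith),
      show -(2 * log (2 / ε)) / 2 = -log (2 / ε) by ring, exp_neg, Real.exp_log (by positivity),
      inv_div]
  have hmax : P.real {ω | ∀ k : Fin K, ω k.succ < √X} ≤ ε / 4 := by
    refine (pi_max_lt_le K _).trans ?_
    calc exp (-(K * (gaussianReal 0 1).real (Set.Ici √X))) ≤ exp (-log (4 / ε)) :=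
          exp_le_exp.2 (neg_le_neg (le_mul_tail hL hK))
      _ = ε / 4 := by rw [exp_neg, Real.exp_log (by positivity), inv_div]
  calc FSK V1 V2 K t ≤ P.real ({ω | ω 0 < -a} ∪ {ω | ∀ k : Fin K, ω k.succ < √X}) :=
        measureReal_mono hsub
    _ ≤ ε / 2 + ε / 4 := (measureReal_union_le _ _).trans (add_le_add hZ0 hmax)
    _ ≤ ε := by linarith
end

section
/- Fix V₁,V₂ ≥ 0 and ε∈(0,1). For every positive integer K, F_{S_K}^{-1}(1−ε) ≤ √(2 V₁ ln K) + √(2 V₁ ln(4/ε)) + √(2 V₂ ln(2/ε)). -/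
/-!
The tail bound `P(Z ≥ t) ≤ exp (-t² / 2)` gives `P(Z₀ ≥ a) ≤ ε / 2` for `a = √(2 ln (2/ε))` and
`P(Z_k ≥ b) ≤ ε / (4 K)` for `b = √(2 ln K) + √(2 ln (4/ε))`, because
`b² ≥ 2 ln K + 2 ln (4/ε)`. By a union bound, outside an event of probability at most `3 ε / 4`
all of `Z₀ < a` and `Z_k < b` hold, and then `S_K ≤ √V₂ a + √V₁ b`, the claimed bound. Hence
`F_{S_K}(s) ≥ 1 - 3 ε / 4 > 1 - ε` for every `s` above the claimed bound, so no such `s` is in the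
set whose supremum is `F_{S_K}^{-1}(1 - ε)`.
-/

open MeasureTheory

/-- Chernoff bound for a standard Gaussian. -/
lemma gaussian_tail (t : ℝ) (ht : 0 ≤ t) :
    (ProbabilityTheory.gaussianReal 0 1).real {x | t ≤ x} ≤ Real.exp (-t ^ 2 / 2) := by
  have h := ProbabilityTheory.measure_ge_le_exp_mul_mgf (X := id)
    (μ := ProbabilityTheory.gaussianReal 0 1) t ht
    (by simpa using ProbabilityTheory.integrable_exp_mul_gaussianReal (μ := 0) (v := 1) t)
  rw [ProbabilityTheory.mgf_id_gaussianReal, ← Real.exp_add] at h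
  refine h.trans (Real.exp_le_exp.mpr ?_)
  simp only [NNReal.coe_one]
  linarith [sq t]

lemma pi_gaussian_tail {n : ℕ} (i : Fin n) (t : ℝ) (ht : 0 ≤ t) :
    (Measure.pi fun _ : Fin n => ProbabilityTheory.gaussianReal 0 1).real {ω | t ≤ ω i} ≤
      Real.exp (-t ^ 2 / 2) := by
  have h := (measurePreserving_eval
    (fun _ : Fin n => ProbabilityTheory.gaussianReal 0 1) i).measureReal_preimage
    (s := {x : ℝ | t ≤ x}) (measurableSet_Ici).nullMeasurableSet
  exact (le_of_eq h).trans (gaussian_tail t ht)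

/-- The union bound: above the claimed value the CDF is at least `1 - 3 ε / 4`. -/
lemma FSK_lower_bound (V1 V2 : ℝ) (hV1 : 0 ≤ V1) (hV2 : 0 ≤ V2)
    (ε : ℝ) (hε : ε ∈ Set.Ioo (0 : ℝ) 1) (K : ℕ) (hKpos : 0 < K) (s : ℝ)
    (hs : Real.sqrt (2 * V1 * Real.log K) + Real.sqrt (2 * V1 * Real.log (4 / ε)) +
        Real.sqrt (2 * V2 * Real.log (2 / ε)) ≤ s) :
    1 - 3 * ε / 4 ≤ FSK V1 V2 K s := by
  obtain ⟨h0, h1⟩ := hε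
  have hK : (1 : ℝ) ≤ K := by exact_mod_cast hKpos
  have hlK : 0 ≤ Real.log K := Real.log_nonneg hK
  have hl2 : 0 ≤ Real.log (2 / ε) := Real.log_nonneg (by rw [le_div_iff₀ h0]; linarith)
  have hl4 : 0 ≤ Real.log (4 / ε) := Real.log_nonneg (by rw [le_div_iff₀ h0]; linarith)
  have split (V L : ℝ) (hV : 0 ≤ V) : √(2 * V * L) = √V * √(2 * L) := by
    rw [← Real.sqrt_mul hV]; ring_nf
  rw [split _ _ hV1, split _ _ hV1, split _ _ hV2] at hs
  set a := √(2 * Real.log (2 / ε)) with ha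
  set b := √(2 * Real.log K) + √(2 * Real.log (4 / ε)) with hb
  have ha0 : 0 ≤ a := Real.sqrt_nonneg _
  have hb0 : 0 ≤ b := by positivity
  have hea : Real.exp (-a ^ 2 / 2) = ε / 2 := by
    rw [ha, Real.sq_sqrt (by positivity),
      show -(2 * Real.log (2 / ε)) / 2 = -Real.log (2 / ε) by ring, Real.exp_neg,
      Real.exp_log (by positivity), inv_div]
  have heb : Real.exp (-b ^ 2 / 2) ≤ ε / (4 * K) := by
    have hsq : 2 * Real.log K + 2 * Real.log (4 / ε) ≤ b ^ 2 := by
      have e1 := Real.sq_sqrt (show 0 ≤ 2 * Real.log K by positivity)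
      have e2 := Real.sq_sqrt (show 0 ≤ 2 * Real.log (4 / ε) by positivity)
      have e3 : 0 ≤ √(2 * Real.log K) * √(2 * Real.log (4 / ε)) := by positivity
      rw [hb]
      nlinarith
    calc Real.exp (-b ^ 2 / 2) ≤ Real.exp (-(Real.log K + Real.log (4 / ε))) :=
          Real.exp_le_exp.mpr (by linarith)
      _ = ε / (4 * K) := by
          rw [Real.exp_neg, Real.exp_add, Real.exp_log (by positivity),
            Real.exp_log (by positivity)]
          field_simp
  set μ := Measure.pi fun _ : Fin (K + 1) => ProbabilityTheory.gaussianReal 0 1 with hμ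
  set A : Set (Fin (K + 1) → ℝ) := {ω | √V2 * ω 0 + √V1 * (⨆ k : Fin K, ω k.succ) ≤ s} with hA
  have hne : Nonempty (Fin K) := ⟨⟨0, hKpos⟩⟩
  have hcover : (Set.univ : Set (Fin (K + 1) → ℝ)) ⊆
      A ∪ ({ω | a ≤ ω 0} ∪ ⋃ k : Fin K, {ω | b ≤ ω k.succ}) := by
    intro ω _
    by_contra hcon
    simp only [Set.mem_union, Set.mem_iUnion, Set.mem_setOf_eq, not_or, not_exists, not_le,
      hA] at hcon
    obtain ⟨c1, c2, c3⟩ := hcon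
    have c4 : (⨆ k : Fin K, ω k.succ) ≤ b := ciSup_le fun k => (c3 k).le
    have c5 := mul_le_mul_of_nonneg_left c4 (Real.sqrt_nonneg V1)
    have c6 := mul_le_mul_of_nonneg_left c2.le (Real.sqrt_nonneg V2)
    rw [hb, mul_add] at c5
    linarith
  have hsum : μ.real (⋃ k : Fin K, {ω | b ≤ ω k.succ}) ≤ ε / 4 := by
    calc μ.real (⋃ k : Fin K, {ω | b ≤ ω k.succ})
        ≤ ∑ k : Fin K, μ.real {ω | b ≤ ω k.succ} := measureReal_iUnion_fintype_le _
      _ ≤ ∑ _k : Fin K, ε / (4 * K) :=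
          Finset.sum_le_sum fun k _ => (pi_gaussian_tail k.succ b hb0).trans heb
      _ = ε / 4 := by
          simp only [Finset.sum_const, Finset.card_univ, Fintype.card_fin, nsmul_eq_mul]
          field_simp
  have hZ0 : μ.real {ω | a ≤ ω 0} ≤ ε / 2 := (pi_gaussian_tail 0 a ha0).trans_eq hea
  have htot : (1 : ℝ) ≤ μ.real A + (μ.real {ω | a ≤ ω 0} +
      μ.real (⋃ k : Fin K, {ω | b ≤ ω k.succ})) := by
    calc (1 : ℝ) = μ.real Set.univ := by simp
      _ ≤ _ := measureReal_mono hcover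
      _ ≤ _ := measureReal_union_le _ _
      _ ≤ _ := by gcongr; exact measureReal_union_le _ _
  change 1 - 3 * ε / 4 ≤ μ.real A
  linarith

/-- Fix `V₁, V₂ ≥ 0` and `ε ∈ (0,1)`. For every positive integer `K`,
`F_{S_K}^{-1}(1−ε) ≤ √(2 V₁ ln K) + √(2 V₁ ln(4/ε)) + √(2 V₂ ln(2/ε))`. -/
theorem FSKinv_upper_bound (V1 V2 : ℝ) (hV1 : 0 ≤ V1) (hV2 : 0 ≤ V2)
    (ε : ℝ) (hε : ε ∈ Set.Ioo (0 : ℝ) 1) (K : ℕ) (hKpos : 0 < K) :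
    FSKinv V1 V2 K (1 - ε) ≤
      Real.sqrt (2 * V1 * Real.log K) + Real.sqrt (2 * V1 * Real.log (4 / ε)) +
        Real.sqrt (2 * V2 * Real.log (2 / ε)) := by
  -- `Real.sSup_le` asks for a nonnegative bound, which covers the junk value `sSup ∅ = 0`.
  refine Real.sSup_le (fun s hs => ?_) (by positivity)
  by_contra! hlt
  have h := FSK_lower_bound V1 V2 hV1 hV2 ε hε K hKpos s hlt.le
  have hs' : FSK V1 V2 K s ≤ 1 - ε := hs
  linarith [hε.1]
end
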